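/- arXiv:math/0606213 — 8 statements merged into one kernel-verified Lean document; each statement's English description precedes it below -/
import Mathlib

section
/- Let V be a nonzero finite-dimensional real inner product space and Φ ⊆ V a finite crystallographic root system spanning V with base F and Weyl group W. Then the following are equivalent: (i) Φ is irreducible; (ii) for every proper subset P ⊊ F the cone W_P·C = ⋃_{w ∈ W_P} w(C) is non-degenerate, i.e. (W_P·C) ∩ (−W_P·C) = {0}; (iii) there exists a maximal proper subset P ⊊ F (i.e. with |P| = |F| − 1) such that W_P·C is non-degenerate. -/
open scoped RealInnerProductSpace

/-!
Distinct simple roots have nonpositive inner product. If `Φ` is irreducible and `γ ∈ F \ P`, let `ω`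
be the fundamental weight of `γ`, i.e. `⟪γ, ω⟫ = 1` and `⟪β, ω⟫ = 0` for the other `β ∈ F`. It is
fixed by `W_P`, and since the inner products of simple roots are nonpositive and `F` does not
split, all its coefficients with respect to `F` are positive. Hence `⟪ω, ·⟫` is positive on
`C \ {0}` and therefore on `W_P · C \ {0}`, which forces non-degeneracy.

Conversely, if `F = A ∪ B` is an orthogonal partition and `|P| = |F| - 1`, one of the parts, say
`A`, lies in `P`. Some element of `W_A` makes a given `α ∈ A` dominant for `A`; its image stays in
the span of `A`, so it is orthogonal to `B` and lies in `C`. Thus `α`, and with it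
`-α = s_α α`, lies in `W_P · C`.
-/

section ObtuseFamilies

variable {ι V : Type*} [Fintype ι] [NormedAddCommGroup V] [InnerProductSpace ℝ V]
  {v : ι → V} {c : ι → ℝ}

lemma exists_forall_inner_sum_smul_eq (hv : LinearIndependent ℝ v) (f : ι → ℝ) :
    ∃ c : ι → ℝ, ∀ j, ⟪v j, ∑ i, c i • v i⟫ = f j := by
  classical
  have hunit : IsUnit (Matrix.gram ℝ v) := (Matrix.posDef_gram_of_linearIndependent hv).isUnit
  obtain ⟨c, hc⟩ := Matrix.mulVec_surjective_iff_isUnit.2 hunit f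
  refine ⟨c, fun j => ?_⟩
  simp only [← hc, inner_sum, inner_smul_right, Matrix.mulVec, dotProduct, Matrix.gram_apply,
    mul_comm]

lemma inner_sum_posPart_sum_negPart_nonpos (hobtuse : Pairwise fun i j => ⟪v i, v j⟫ ≤ 0)
    (c : ι → ℝ) : ⟪∑ i, (c i)⁺ • v i, ∑ j, (c j)⁻ • v j⟫ ≤ 0 := by
  simp only [sum_inner, inner_sum, real_inner_smul_left, real_inner_smul_right]
  refine Finset.sum_nonpos fun j _ => Finset.sum_nonpos fun i _ => ?_
  obtain rfl | hij := eq_or_ne i j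
  · obtain h | h := le_total 0 (c i)
    · simp [negPart_eq_zero.2 h]
    · simp [posPart_eq_zero.2 h]
  · exact mul_nonpos_of_nonneg_of_nonpos (negPart_nonneg _)
      (mul_nonpos_of_nonneg_of_nonpos (posPart_nonneg _) (hobtuse hij))

lemma coeff_nonneg_of_inner_nonneg (hv : LinearIndependent ℝ v)
    (hobtuse : Pairwise fun i j => ⟪v i, v j⟫ ≤ 0)
    (hc : ∀ j, 0 ≤ ⟪v j, ∑ i, c i • v i⟫) (i : ι) : 0 ≤ c i := by
  set n := ∑ j, (c j)⁻ • v j with hn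
  have hsplit : ∑ i, c i • v i = ∑ i, (c i)⁺ • v i - n := by
    simp only [hn, ← Finset.sum_sub_distrib, ← sub_smul, posPart_sub_negPart]
  have hnonneg : 0 ≤ ⟪∑ i, c i • v i, n⟫ := by
    simp only [hn, inner_sum _ (fun j => (c j)⁻ • v j), real_inner_smul_right]
    exact Finset.sum_nonneg fun j _ =>
      mul_nonneg (negPart_nonneg _) (real_inner_comm (v j) _ ▸ hc j)
  have hn_zero : n = 0 := by
    rw [hsplit, inner_sub_left] at hnonneg
    have hcross := inner_sum_posPart_sum_negPart_nonpos hobtuse c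
    exact real_inner_self_nonpos.1 (by linarith)
  exact negPart_eq_zero.1 (Fintype.linearIndependent_iff.1 hv _ hn_zero i)

lemma inner_eq_zero_of_coeff_eq_zero (hobtuse : Pairwise fun i j => ⟪v i, v j⟫ ≤ 0)
    (hc : ∀ i, 0 ≤ c i) {i j : ι} (hj : 0 ≤ ⟪v j, ∑ i, c i • v i⟫) (hcj : c j = 0)
    (hci : c i ≠ 0) : ⟪v i, v j⟫ = 0 := by
  have hterm : ∀ k ∈ Finset.univ, c k * ⟪v j, v k⟫ ≤ 0 := by
    intro k _
    obtain rfl | hjk := eq_or_ne j k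
    · simp [hcj]
    · exact mul_nonpos_of_nonneg_of_nonpos (hc k) (hobtuse hjk)
  simp only [inner_sum, real_inner_smul_right] at hj
  have hsum := (Finset.sum_eq_zero_iff_of_nonpos hterm).1 (hj.antisymm' (Finset.sum_nonpos hterm))
  rw [real_inner_comm]
  exact (mul_eq_zero.1 (hsum i (Finset.mem_univ i))).resolve_left hci

lemma nonpos_of_sub_smul_eq_sum (hv : LinearIndependent ℝ v) {i j : ι} (hij : i ≠ j) {m : ℝ}
    (hsign : (∀ k, 0 ≤ c k) ∨ ∀ k, c k ≤ 0) (heq : v j - m • v i = ∑ k, c k • v k) : m ≤ 0 := by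
  classical
  have hcoeff : Pi.single j 1 - Pi.single i m = c := by
    apply hv.fintypeLinearCombination_injective
    simpa [map_sub, Fintype.linearCombination_apply] using heq
  have hi : -m = c i := by simp [← hcoeff, hij]
  have hj : 1 = c j := by simp [← hcoeff, hij.symm]
  rcases hsign with h | h
  · linarith [h i]
  · linarith [h j]

end ObtuseFamilies

section Irreducible

variable {V : Type*} [NormedAddCommGroup V] [InnerProductSpace ℝ V]

/-- A set of vectors is orthogonally irreducible if it is not the union of two nonempty disjoint
mutually orthogonal subsets; for a base this is irreducibility of the root system. -/
def OrthogonallyIrreducible (F : Set V) : Prop :=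
  ∀ A B : Set V, A ∪ B = F → Disjoint A B → (∀ α ∈ A, ∀ β ∈ B, ⟪α, β⟫ = 0) → A = ∅ ∨ B = ∅

lemma orthogonallyIrreducible_coe_iff {F : Finset V} :
    OrthogonallyIrreducible (F : Set V) ↔
      ¬ ∃ F₁ F₂ : Finset V, (F₁ : Set V) ∪ (F₂ : Set V) = (F : Set V) ∧ F₁.Nonempty ∧
        F₂.Nonempty ∧ Disjoint F₁ F₂ ∧ ∀ α ∈ F₁, ∀ β ∈ F₂, ⟪α, β⟫ = 0 := by
  constructor
  · rintro hF ⟨F₁, F₂, hunion, h₁, h₂, hdisj, hort⟩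
    have := hF F₁ F₂ hunion (Finset.disjoint_coe.2 hdisj) hort
    simp_all [Finset.nonempty_iff_ne_empty]
  · intro hF A B hunion hdisj hort
    lift A to Finset V using F.finite_toSet.subset (hunion ▸ Set.subset_union_left)
    lift B to Finset V using F.finite_toSet.subset (hunion ▸ Set.subset_union_right)
    by_contra! hne
    exact hF ⟨A, B, hunion, hne.1, hne.2, Finset.disjoint_coe.1 hdisj, hort⟩

lemma OrthogonallyIrreducible.coeff_pos {ι : Type*} [Fintype ι] {v : ι → V} {c : ι → ℝ}
    (hirr : OrthogonallyIrreducible (Set.range v)) (hv : LinearIndependent ℝ v)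
    (hobtuse : Pairwise fun i j => ⟪v i, v j⟫ ≤ 0)
    (hc : ∀ j, 0 ≤ ⟪v j, ∑ i, c i • v i⟫) (hne : ∑ i, c i • v i ≠ 0) (i : ι) : 0 < c i := by
  have hnonneg := coeff_nonneg_of_inner_nonneg hv hobtuse hc
  have hunion : v '' {i | c i ≠ 0} ∪ v '' {i | c i = 0} = Set.range v := by
    rw [← Set.image_union, ← Set.image_univ]
    congr 1
    ext i
    simpa using ne_or_eq (c i) 0
  have hdisj : Disjoint (v '' {i | c i ≠ 0}) (v '' {i | c i = 0}) :=
    (Set.disjoint_image_iff hv.injective).2 (Set.disjoint_left.2 fun _ h h' => h h')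
  have hort : ∀ α ∈ v '' {i | c i ≠ 0}, ∀ β ∈ v '' {i | c i = 0}, ⟪α, β⟫ = 0 := by
    rintro _ ⟨i, hi, rfl⟩ _ ⟨j, hj, rfl⟩
    exact inner_eq_zero_of_coeff_eq_zero hobtuse hnonneg (hc j) hj hi
  obtain h | h := hirr _ _ hunion hdisj hort
  · have hzero : ∀ i, c i = 0 := by simpa [Set.eq_empty_iff_forall_notMem] using h
    simp [hzero] at hne
  · rw [Set.image_eq_empty] at h
    exact (hnonneg i).lt_of_ne' fun hi => Set.eq_empty_iff_forall_notMem.1 h i hi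

end Irreducible

section Parabolic

variable {V : Type*} [NormedAddCommGroup V] [InnerProductSpace ℝ V] {F P Q S : Set V}

/-- The closed dominant chamber `C` of the base `F`. -/
def dominantChamber (F : Set V) : Set V := {v | ∀ β ∈ F, 0 ≤ ⟪β, v⟫}

/-- The orthogonal reflection `s_α` in the hyperplane orthogonal to `α` (the identity if
`α = 0`). -/
noncomputable abbrev rootReflection (α : V) : V ≃ₗᵢ[ℝ] V := (ℝ ∙ α)ᗮ.reflection

lemma rootReflection_apply (α v : V) :
    rootReflection α v = v - (2 * ⟪α, v⟫ / ⟪α, α⟫) • α := by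
  rw [rootReflection, Submodule.reflection_orthogonal_apply, Submodule.reflection_singleton_apply,
    real_inner_self_eq_norm_sq, neg_sub, two_nsmul, ← add_smul, ← two_mul, mul_div_assoc]
  rfl

/-- The parabolic subgroup `W_P` generated by the reflections `s_α`, `α ∈ P`. -/
def parabolicSubgroup (P : Set V) : Subgroup (V ≃ₗᵢ[ℝ] V) :=
  Subgroup.closure (rootReflection '' P)

lemma rootReflection_mem_parabolicSubgroup {α : V} (hα : α ∈ P) :
    rootReflection α ∈ parabolicSubgroup P :=
  Subgroup.subset_closure (Set.mem_image_of_mem _ hα)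

lemma parabolicSubgroup_mono (h : Q ⊆ P) : parabolicSubgroup Q ≤ parabolicSubgroup P :=
  Subgroup.closure_mono (Set.image_mono h)

lemma parabolicSubgroup_toSubmonoid (P : Set V) :
    (parabolicSubgroup P).toSubmonoid = Submonoid.closure (rootReflection '' P) := by
  have hinv : (rootReflection '' P)⁻¹ = rootReflection '' P := by
    simp only [← Set.image_inv_eq_inv, Set.image_image, Submodule.reflection_inv]
  rw [parabolicSubgroup, Subgroup.closure_toSubmonoid, hinv, Set.union_self]

lemma mapsTo_of_mem_parabolicSubgroup (hS : ∀ α ∈ P, Set.MapsTo (rootReflection α) S S)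
    {w : V ≃ₗᵢ[ℝ] V} (hw : w ∈ parabolicSubgroup P) : Set.MapsTo w S S := by
  rw [← Subgroup.mem_toSubmonoid, parabolicSubgroup_toSubmonoid] at hw
  induction hw using Submonoid.closure_induction with
  | mem w hw =>
    obtain ⟨α, hα, rfl⟩ := hw
    exact hS α hα
  | one => exact Set.mapsTo_id S
  | mul w w' _ _ hw hw' => exact hw.comp hw'

lemma apply_mem_span_of_mem_parabolicSubgroup {w : V ≃ₗᵢ[ℝ] V} (hw : w ∈ parabolicSubgroup P)
    {x : V} (hx : x ∈ Submodule.span ℝ P) : w x ∈ Submodule.span ℝ P := by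
  refine mapsTo_of_mem_parabolicSubgroup (fun α hα y hy => ?_) hw hx
  rw [rootReflection_apply]
  exact sub_mem hy (Submodule.smul_mem _ _ (Submodule.subset_span hα))

lemma inner_apply_of_mem_parabolicSubgroup {ω : V} (hω : ∀ α ∈ P, ⟪α, ω⟫ = 0)
    {w : V ≃ₗᵢ[ℝ] V} (hw : w ∈ parabolicSubgroup P) (x : V) : ⟪ω, w x⟫ = ⟪ω, x⟫ := by
  have hfix : w ω = ω := by
    refine mapsTo_of_mem_parabolicSubgroup (S := {ω}) (fun α hα => ?_) hw rfl
    simp [rootReflection_apply, hω α hα]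
  rw [← w.inner_map_map ω x, hfix]

lemma exists_mem_parabolicSubgroup_apply_mem_dominantChamber (hS : S.Finite)
    (hinv : ∀ α ∈ P, Set.MapsTo (rootReflection α) S S) {ρ : V} (hρ : ∀ β ∈ P, 0 < ⟪β, ρ⟫)
    {x : V} (hx : x ∈ S) : ∃ w ∈ parabolicSubgroup P, w x ∈ dominantChamber P := by
  have hfin : ((fun w : V ≃ₗᵢ[ℝ] V => w x) '' parabolicSubgroup P).Finite :=
    hS.subset (Set.image_subset_iff.2 fun w hw => mapsTo_of_mem_parabolicSubgroup hinv hw hx)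
  -- A maximizer `y` of `⟪·, ρ⟫` on the orbit is dominant: if `⟪β, y⟫ < 0`, then passing from `y` to
  -- `s_β y` adds a positive multiple of `β`, which increases `⟪·, ρ⟫`.
  obtain ⟨_, ⟨w, hw, rfl⟩, hmax⟩ := Set.exists_max_image _ (fun y => ⟪y, ρ⟫) hfin
    (Set.Nonempty.image _ ⟨1, one_mem _⟩)
  refine ⟨w, hw, fun β hβ => ?_⟩
  by_contra! hneg
  have hle : ⟪rootReflection β (w x), ρ⟫ ≤ ⟪w x, ρ⟫ :=
    hmax _ ⟨rootReflection β * w, mul_mem (rootReflection_mem_parabolicSubgroup hβ) hw, rfl⟩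
  have hβ_pos : 0 < ⟪β, β⟫ := real_inner_self_pos.2 fun h => by simp [h] at hneg
  have hcoeff : 2 * ⟪β, w x⟫ / ⟪β, β⟫ < 0 := div_neg_of_neg_of_pos (by linarith) hβ_pos
  rw [rootReflection_apply, inner_sub_left, real_inner_smul_left] at hle
  linarith [mul_neg_of_neg_of_pos hcoeff (hρ β hβ)]

/-- The cone `W_P · C`, the union of the translates under `W_P` of the dominant chamber `C`
of `F`. -/
def parabolicCone (P F : Set V) : Set V :=
  {v | ∃ w ∈ parabolicSubgroup P, ∃ u ∈ dominantChamber F, w u = v}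

lemma dominantChamber_subset_parabolicCone : dominantChamber F ⊆ parabolicCone P F :=
  fun u hu => ⟨1, one_mem _, u, hu, rfl⟩

lemma zero_mem_parabolicCone : (0 : V) ∈ parabolicCone P F :=
  dominantChamber_subset_parabolicCone fun β _ => (inner_zero_right β).ge

lemma apply_mem_parabolicCone {w : V ≃ₗᵢ[ℝ] V} (hw : w ∈ parabolicSubgroup P) {v : V}
    (hv : v ∈ parabolicCone P F) : w v ∈ parabolicCone P F := by
  obtain ⟨w', hw', u, hu, rfl⟩ := hv
  exact ⟨w * w', mul_mem hw hw', u, hu, rfl⟩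

/-- Isometries of `V` regarded as self-maps of `V`. -/
def isometryToEnd : (V ≃ₗᵢ[ℝ] V) →* Function.End V where
  toFun w := (w : V → V)
  map_one' := rfl
  map_mul' _ _ := rfl

lemma parabolicCone_eq_of_reflections {s : V → V → V}
    (hs : ∀ α ∈ P, ∀ v, s α v = v - (2 * ⟪α, v⟫ / ⟪α, α⟫) • α) :
    parabolicCone P F =
      {v | ∃ w ∈ Submonoid.closure {f : Function.End V | ∃ α ∈ P, f = s α},
        ∃ u ∈ dominantChamber F, (w : V → V) u = v} := by
  have hgen : {f : Function.End V | ∃ α ∈ P, f = s α} =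
      isometryToEnd '' (rootReflection '' P) := by
    ext f
    simp only [Set.image_image, Set.mem_image, Set.mem_ofPred_eq]
    refine exists_congr fun α => and_congr_right fun hα => ?_
    have hsα : s α = isometryToEnd (rootReflection α) :=
      funext fun v => (hs α hα v).trans (rootReflection_apply α v).symm
    rw [hsα, eq_comm]
  rw [hgen, ← MonoidHom.map_mclosure, ← parabolicSubgroup_toSubmonoid]
  ext v
  simp only [parabolicCone, Submonoid.mem_map, exists_exists_and_eq_and]
  rfl

end Parabolic

section Nondegeneracy

variable {V : Type*} [NormedAddCommGroup V] [InnerProductSpace ℝ V] {F P : Set V}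

lemma inter_neg_eq_singleton_zero_of_inner_pos {S : Set V} (hzero : (0 : V) ∈ S) {ω : V}
    (hω : ∀ v ∈ S, v ≠ 0 → 0 < ⟪ω, v⟫) : S ∩ -S = {0} := by
  refine Set.Subset.antisymm (fun v ⟨hv, hv'⟩ => ?_) (by simpa using hzero)
  by_contra hne
  have hpos := hω v hv hne
  have hneg := hω (-v) hv' (neg_ne_zero.2 hne)
  rw [inner_neg_right] at hneg
  linarith

lemma eq_zero_of_forall_inner_eq_zero (hspan : Submodule.span ℝ F = ⊤) {u : V}
    (hu : ∀ β ∈ F, ⟪β, u⟫ = 0) : u = 0 := by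
  have hort : Submodule.span ℝ F ⟂ Submodule.span ℝ {u} :=
    Submodule.isOrtho_span.2 fun β hβ _ hu' => Set.mem_singleton_iff.1 hu' ▸ hu β hβ
  simpa [hspan] using hort

lemma inner_sum_smul_pos_of_mem_dominantChamber {ι : Type*} [Fintype ι] {v : ι → V}
    (hspan : Submodule.span ℝ (Set.range v) = ⊤) {c : ι → ℝ} (hc : ∀ i, 0 < c i) {u : V}
    (hu : u ∈ dominantChamber (Set.range v)) (hne : u ≠ 0) : 0 < ⟪∑ i, c i • v i, u⟫ := by
  simp only [sum_inner, real_inner_smul_left]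
  have hnonneg : ∀ i, 0 ≤ ⟪v i, u⟫ := fun i => hu _ ⟨i, rfl⟩
  refine Finset.sum_pos' (fun i _ => mul_nonneg (hc i).le (hnonneg i)) ?_
  by_contra! h
  refine hne (eq_zero_of_forall_inner_eq_zero hspan ?_)
  rintro _ ⟨i, rfl⟩
  exact (nonpos_of_mul_nonpos_right (h i (Finset.mem_univ i)) (hc i)).antisymm (hnonneg i)

theorem OrthogonallyIrreducible.parabolicCone_inter_neg_eq {ι : Type*} [Finite ι] {v : ι → V}
    (hirr : OrthogonallyIrreducible (Set.range v)) (hv : LinearIndependent ℝ v)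
    (hspan : Submodule.span ℝ (Set.range v) = ⊤) (hobtuse : Pairwise fun i j => ⟪v i, v j⟫ ≤ 0)
    (hP : P ⊂ Set.range v) :
    parabolicCone P (Set.range v) ∩ -parabolicCone P (Set.range v) = {0} := by
  classical
  have := Fintype.ofFinite ι
  obtain ⟨_, ⟨k, rfl⟩, hk⟩ := Set.exists_of_ssubset hP
  obtain ⟨c, hc⟩ := exists_forall_inner_sum_smul_eq hv (Pi.single k 1)
  set ω := ∑ i, c i • v i
  have hc_pos : ∀ i, 0 < c i := by
    refine hirr.coeff_pos hv hobtuse (fun j => ?_) fun hω => ?_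
    · rw [hc]
      exact (Pi.single_nonneg.2 zero_le_one : (0 : ι → ℝ) ≤ Pi.single k 1) j
    · simpa [ω, hω] using hc k
  have hω_orth : ∀ α ∈ P, ⟪α, ω⟫ = 0 := by
    intro α hα
    obtain ⟨j, rfl⟩ := hP.subset hα
    rw [hc, Pi.single_eq_of_ne (by rintro rfl; exact hk hα)]
  refine inter_neg_eq_singleton_zero_of_inner_pos (ω := ω) zero_mem_parabolicCone ?_
  rintro _ ⟨w, hw, u, hu, rfl⟩ hne
  rw [inner_apply_of_mem_parabolicSubgroup hω_orth hw]
  exact inner_sum_smul_pos_of_mem_dominantChamber hspan hc_pos hu fun h => hne (by simp [h])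

lemma mem_parabolicCone_inter_neg {Φ A B : Set V} (hΦ : Φ.Finite)
    (hinv : ∀ α ∈ A, Set.MapsTo (rootReflection α) Φ Φ) {ρ : V} (hρ : ∀ β ∈ A, 0 < ⟪β, ρ⟫)
    (hort : ∀ α ∈ A, ∀ β ∈ B, ⟪α, β⟫ = 0) (hAP : A ⊆ P) {α : V} (hα : α ∈ A) (hαΦ : α ∈ Φ) :
    α ∈ parabolicCone P (A ∪ B) ∩ -parabolicCone P (A ∪ B) := by
  obtain ⟨w, hw, hdom⟩ :=
    exists_mem_parabolicSubgroup_apply_mem_dominantChamber hΦ hinv hρ hαΦ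
  have hwα : w α ∈ Submodule.span ℝ A :=
    apply_mem_span_of_mem_parabolicSubgroup hw (Submodule.subset_span hα)
  have hwα_orth : ∀ β ∈ B, ⟪β, w α⟫ = 0 := fun β hβ =>
    Submodule.inner_right_of_mem_orthogonal (Submodule.subset_span hβ)
      (Submodule.isOrtho_span.2 hort hwα)
  have hchamber : w α ∈ dominantChamber (A ∪ B) := by
    rintro β (hβ | hβ)
    · exact hdom β hβ
    · exact (hwα_orth β hβ).ge
  have hmem : α ∈ parabolicCone P (A ∪ B) := by
    simpa using apply_mem_parabolicCone (parabolicSubgroup_mono hAP (inv_mem hw))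
      (dominantChamber_subset_parabolicCone hchamber)
  refine ⟨hmem, ?_⟩
  rw [Set.mem_neg, ← Submodule.reflection_orthogonalComplement_singleton_eq_neg (𝕜 := ℝ)]
  exact apply_mem_parabolicCone (rootReflection_mem_parabolicSubgroup (hAP hα)) hmem

theorem orthogonallyIrreducible_of_parabolicCone_inter_neg_eq {Φ : Set V} (hΦ : Φ.Finite)
    (hFΦ : F ⊆ Φ) (hinv : ∀ α ∈ F, Set.MapsTo (rootReflection α) Φ Φ) {ρ : V}
    (hρ : ∀ β ∈ F, 0 < ⟪β, ρ⟫) {γ : V} (hF : insert γ P = F)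
    (hcone : parabolicCone P F ∩ -parabolicCone P F = {0}) : OrthogonallyIrreducible F := by
  have hpart_empty : ∀ A B : Set V, A ∪ B = F → (∀ α ∈ A, ∀ β ∈ B, ⟪α, β⟫ = 0) →
      γ ∉ A → A = ∅ := by
    rintro A B rfl hort hγ
    have hAP : A ⊆ P := (Set.subset_insert_iff_of_notMem hγ).1 (hF ▸ Set.subset_union_left)
    refine Set.eq_empty_of_forall_notMem fun α hα => ?_
    have hα_zero : α ∈ ({0} : Set V) := hcone ▸ mem_parabolicCone_inter_neg hΦ
      (fun α hα => hinv α (.inl hα)) (fun β hβ => hρ β (.inl hβ)) hort hAP hα (hFΦ (.inl hα))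
    simpa [Set.mem_singleton_iff.1 hα_zero] using hρ α (.inl hα)
  intro A B hunion hdisj hort
  by_cases hγ : γ ∈ A
  · exact .inr (hpart_empty B A (Set.union_comm A B ▸ hunion)
      (fun β hβ α hα => real_inner_comm α β ▸ hort α hα β hβ) (hdisj.notMem_of_mem_left hγ))
  · exact .inl (hpart_empty A B hunion hort hγ)

end Nondegeneracy

section Base

variable {V : Type*} [NormedAddCommGroup V] [InnerProductSpace ℝ V] {F : Finset V}

lemma span_eq_top_of_forall_eq_sum {Φ : Set V} (hΦ : Submodule.span ℝ Φ = ⊤)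
    (hF : ∀ α ∈ Φ, ∃ c : V → ℝ, α = ∑ β ∈ F, c β • β) : Submodule.span ℝ (F : Set V) = ⊤ := by
  refine top_le_iff.1 (hΦ ▸ Submodule.span_le.2 fun α hα => ?_)
  obtain ⟨c, rfl⟩ := hF α hα
  exact sum_mem fun β hβ => Submodule.smul_mem _ _ (Submodule.subset_span hβ)

lemma inner_nonpos_of_rootReflection_eq_sum (hind : LinearIndependent ℝ (fun β : F => (β : V)))
    {α β : F} (hne : α ≠ β) {c : V → ℝ}
    (hsign : (∀ γ ∈ F, 0 ≤ c γ) ∨ ∀ γ ∈ F, c γ ≤ 0)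
    (heq : rootReflection (α : V) β = ∑ γ ∈ F, c γ • γ) : ⟪(α : V), β⟫ ≤ 0 := by
  have hm : 2 * ⟪(α : V), β⟫ / ⟪(α : V), α⟫ ≤ 0 := by
    refine nonpos_of_sub_smul_eq_sum hind hne (c := fun γ : F => c γ) (by simpa using hsign) ?_
    rw [← rootReflection_apply, heq, Finset.sum_coe_sort F fun γ => c γ • γ]
  have hα : 0 < ⟪(α : V), α⟫ := real_inner_self_pos.2 (hind.ne_zero α)
  by_contra! hpos
  exact hm.not_gt (by positivity)

end Base

theorem stmt_0_general {V : Type*} [NormedAddCommGroup V] [InnerProductSpace ℝ V] [Nontrivial V]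
    (Φ : Set V) (hΦfin : Φ.Finite) (hΦspan : Submodule.span ℝ Φ = ⊤)
    (F : Finset V) (hFΦ : (F : Set V) ⊆ Φ)
    (s : V → V → V)
    (hs : ∀ α ∈ F, ∀ v : V, s α v = v - (2 * ⟪α, v⟫ / ⟪α, α⟫) • α)
    (hΦinv : ∀ α ∈ F, ∀ γ ∈ Φ, s α γ ∈ Φ)
    (hFind : LinearIndependent ℝ (fun β : F => (β : V)))
    (hbase : ∀ α ∈ Φ, ∃ c : V → ℝ, ((∀ β ∈ F, 0 ≤ c β) ∨ (∀ β ∈ F, c β ≤ 0)) ∧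
        α = ∑ β ∈ F, c β • β)
    (C : Set V) (hC : C = {v : V | ∀ β ∈ F, 0 ≤ ⟪β, v⟫})
    (orb : Finset V → Set V)
    (horb : ∀ P : Finset V, orb P =
      {v : V | ∃ w ∈ Submonoid.closure {f : Function.End V | ∃ α ∈ P, f = s α},
        ∃ u ∈ C, (w : V → V) u = v}) :
    List.TFAE
      [ ¬ ∃ F₁ F₂ : Finset V, (F₁ : Set V) ∪ (F₂ : Set V) = (F : Set V) ∧ F₁.Nonempty ∧
          F₂.Nonempty ∧ Disjoint F₁ F₂ ∧ ∀ α ∈ F₁, ∀ β ∈ F₂, ⟪α, β⟫ = 0,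
        ∀ P : Finset V, P ⊂ F → orb P ∩ (-orb P) = {0},
        ∃ P : Finset V, P ⊂ F ∧ P.card = F.card - 1 ∧ orb P ∩ (-orb P) = {0} ] := by
  classical
  have hinv : ∀ α ∈ F, Set.MapsTo (rootReflection α) Φ Φ := fun α hα γ hγ => by
    rw [rootReflection_apply, ← hs α hα]
    exact hΦinv α hα γ hγ
  have hspan : Submodule.span ℝ (F : Set V) = ⊤ :=
    span_eq_top_of_forall_eq_sum hΦspan fun α hα => (hbase α hα).imp fun _ hc => hc.2
  have hFne : F.Nonempty := Finset.nonempty_iff_ne_empty.2 fun h => by simp [h] at hspan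
  have hobtuse : Pairwise fun α β : F => ⟪(α : V), β⟫ ≤ 0 := fun α β hne =>
    have ⟨c, hsign, heq⟩ := hbase _ (hinv α α.2 (hFΦ β.2))
    inner_nonpos_of_rootReflection_eq_sum hFind hne hsign heq
  have hcone : ∀ P ⊂ F, orb P = parabolicCone P F := fun P hP => by
    rw [horb, hC]
    exact (parabolicCone_eq_of_reflections fun α hα => hs α (hP.subset hα)).symm
  rw [← orthogonallyIrreducible_coe_iff]
  tfae_have 1 → 2 := fun hirr P hP => by
    have hrange : Set.range (fun β : F => (β : V)) = F := Subtype.range_coe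
    rw [hcone P hP]
    rw [← hrange] at hirr hspan ⊢
    exact hirr.parabolicCone_inter_neg_eq hFind hspan hobtuse (hrange ▸ Finset.coe_ssubset.2 hP)
  tfae_have 2 → 3 := fun h => by
    obtain ⟨γ, hγ⟩ := hFne
    exact ⟨F.erase γ, Finset.erase_ssubset hγ, Finset.card_erase_of_mem hγ,
      h _ (Finset.erase_ssubset hγ)⟩
  tfae_have 3 → 1 := by
    rintro ⟨P, hP, hcard, hnondeg⟩
    obtain ⟨γ, -, rfl⟩ := Finset.exists_eq_insert_iff.2
      ⟨hP.subset, hcard ▸ Nat.sub_add_cancel hFne.card_pos⟩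
    obtain ⟨c, hc⟩ := exists_forall_inner_sum_smul_eq hFind 1
    exact orthogonallyIrreducible_of_parabolicCone_inter_neg_eq hΦfin hFΦ hinv
      (fun β hβ => one_pos.trans_eq (hc ⟨β, hβ⟩).symm) (Finset.coe_insert γ P).symm
      (hcone P hP ▸ hnondeg)
  tfae_finish

/-- let `V ≠ 0` be a finite-dimensional real inner product space and
`Φ ⊆ V` a finite crystallographic root system spanning `V`, with base `F`, Weyl
chamber `C` and reflections `s α`.  For `P ⊆ F` the set `orb P = W_P·C` is the union
of the images of `C` under words in the reflections `s α`, `α ∈ P` (reflections are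
involutions, so the monoid closure equals the parabolic subgroup `W_P`).
Then TFAE: (i) `Φ` is irreducible (no orthogonal partition of `F`);
(ii) `W_P·C` is non-degenerate for every proper `P ⊊ F`;
(iii) `W_P·C` is non-degenerate for some maximal proper `P ⊊ F`. -/
theorem stmt_0 {V : Type*} [NormedAddCommGroup V] [InnerProductSpace ℝ V]
    [FiniteDimensional ℝ V] (hV : 0 < Module.finrank ℝ V)
    (Φ : Set V) (hΦfin : Φ.Finite) (hΦ0 : (0 : V) ∉ Φ)
    (hΦspan : Submodule.span ℝ Φ = ⊤)
    (s : V → V → V)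
    (hs : ∀ α ∈ Φ, ∀ v : V, s α v = v - (2 * ⟪α, v⟫ / ⟪α, α⟫) • α)
    (hΦinv : ∀ α ∈ Φ, ∀ γ ∈ Φ, s α γ ∈ Φ)
    (hcrys : ∀ α ∈ Φ, ∀ γ ∈ Φ, ∃ m : ℤ, (m : ℝ) = 2 * ⟪α, γ⟫ / ⟪α, α⟫)
    (hred : ∀ α ∈ Φ, ∀ c : ℝ, c • α ∈ Φ → c = 1 ∨ c = -1)
    (F : Finset V) (hFΦ : (F : Set V) ⊆ Φ)
    (hFind : LinearIndependent ℝ (fun β : F => (β : V)))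
    (hbase : ∀ α ∈ Φ, ∃ c : V → ℤ, ((∀ β ∈ F, 0 ≤ c β) ∨ (∀ β ∈ F, c β ≤ 0)) ∧
        α = ∑ β ∈ F, (c β : ℝ) • β)
    (C : Set V) (hC : C = {v : V | ∀ β ∈ F, 0 ≤ ⟪β, v⟫})
    (orb : Finset V → Set V)
    (horb : ∀ P : Finset V, orb P =
      {v : V | ∃ w ∈ Submonoid.closure {f : Function.End V | ∃ α ∈ P, f = s α},
        ∃ u ∈ C, (w : V → V) u = v}) :
    List.TFAE
      [ ¬ ∃ F₁ F₂ : Finset V, (F₁ : Set V) ∪ (F₂ : Set V) = (F : Set V) ∧ F₁.Nonempty ∧ F₂.Nonempty ∧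
          Disjoint F₁ F₂ ∧ ∀ α ∈ F₁, ∀ β ∈ F₂, ⟪α, β⟫ = 0,
        ∀ P : Finset V, P ⊂ F → orb P ∩ (-orb P) = {0},
        ∃ P : Finset V, P ⊂ F ∧ P.card = F.card - 1 ∧ orb P ∩ (-orb P) = {0} ] :=
  have := Module.nontrivial_of_finrank_pos hV
  stmt_0_general Φ hΦfin hΦspan F hFΦ s (fun α hα => hs α (hFΦ hα))
    (fun α hα => hΦinv α (hFΦ hα)) hFind
    (fun α hα =>
      let ⟨c, hsign, hα_eq⟩ := hbase α hα
      ⟨fun β => c β, by simpa using hsign, hα_eq⟩)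
    C hC orb horb
end

section
/- For each 1 ≤ i ≤ n the following are equivalent: (i) ω_i/k_i is an extreme point of the closure of Ω; (ii) the extended Dynkin diagram with the vertex α_i removed, D* − {α_i}, is connected, i.e. the set Π₀ ∖ {α_i} admits no partition into two nonempty mutually orthogonal subsets. -/
open scoped RealInnerProductSpace

/-!
A point `P` of the polyhedron `closure Ω` is extreme iff the roots `α` with `|α(P)| = 1` span.
For `P = ωᵢ/kᵢ` these are, up to sign, the roots `γ` whose `αᵢ`-coefficient is `kᵢ`; they form a
set `F` containing the highest root `β` and stable under the simple reflections `sⱼ`, `j ≠ i`.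

Stability makes every `αⱼ`, `j ≠ i`, either a member of `span F` or orthogonal to it, so if
`D* - {αᵢ}` is connected, then `span F` contains `β` and all these `αⱼ`, hence everything.
Conversely, let `T` be the part not containing `-β` of an orthogonal partition. If some `γ ∈ F` were
not orthogonal to `T`, one of maximal height would satisfy `⟪γ, αⱼ⟫ ≥ 0` for all `j ∈ T`. The
`T`-component of `β - γ` is a nonnegative combination of the `αⱼ`, `j ∈ T`, having nonpositive inner
product with each of them, so it vanishes and `γ` is orthogonal to `T` after all.
-/

open Module Set Filter Topology

section

variable {V ι : Type*} [NormedAddCommGroup V] [InnerProductSpace ℝ V]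

lemma mem_orthogonal_span_iff {F : Set V} {v : V} :
    v ∈ (Submodule.span ℝ F)ᗮ ↔ ∀ γ ∈ F, ⟪γ, v⟫ = 0 :=
  Submodule.span_le (p := LinearMap.ker ((innerₗ V).flip v))

section Polyhedron

lemma closure_setOf_forall_abs_inner_lt_one (R : Set V) :
    closure {Y : V | ∀ α ∈ R, |⟪α, Y⟫| < 1} = (innerₗ V).polar R := by
  refine Subset.antisymm (closure_minimal (fun Y hY α hα ↦ (hY α hα).le) ?_) fun Y hY ↦ ?_
  · rw [LinearMap.polar_eq_biInter_preimage]
    exact isClosed_biInter fun α _ ↦ Metric.isClosed_closedBall.preimage (innerSL ℝ α).continuous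
  · have htendsto : Tendsto (fun t : ℝ ↦ t • Y) (𝓝[<] 1) (𝓝 Y) := by
      have hcont : Continuous fun t : ℝ ↦ t • Y := by fun_prop
      simpa only [one_smul] using (hcont.tendsto 1).mono_left nhdsWithin_le_nhds
    refine mem_closure_of_tendsto htendsto ?_
    filter_upwards [Ioo_mem_nhdsLT zero_lt_one] with t ⟨ht0, ht1⟩ α hα
    calc |⟪α, t • Y⟫| = t * |⟪α, Y⟫| := by rw [inner_smul_right, abs_mul, abs_of_pos ht0]
      _ ≤ t := mul_le_of_le_one_right ht0.le (hY α hα)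
      _ < 1 := ht1

lemma inner_eq_of_mem_openSegment {α P x y : V} (hP : |⟪α, P⟫| = 1) (hx : |⟪α, x⟫| ≤ 1)
    (hy : |⟪α, y⟫| ≤ 1) (hseg : P ∈ openSegment ℝ x y) : ⟪α, x⟫ = ⟪α, P⟫ := by
  have hext : ⟪α, P⟫ ∈ (Metric.closedBall (0 : ℝ) 1).extremePoints ℝ := by
    rw [StrictConvexSpace.extremePoints_closedBall_eq_sphere]
    simpa using hP
  refine hext.2 (by simpa using hx) (by simpa using hy) ?_
  simpa using image_openSegment ℝ (innerₗ V α).toAffineMap x y ▸ mem_image_of_mem _ hseg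

lemma eventually_add_smul_mem_polar {R : Set V} (hR : R.Finite) {P v : V}
    (hP : P ∈ (innerₗ V).polar R) (hv : ∀ α ∈ R, |⟪α, P⟫| = 1 → ⟪α, v⟫ = 0) :
    ∀ᶠ ε : ℝ in 𝓝 0, P + ε • v ∈ (innerₗ V).polar R := by
  simp only [LinearMap.polar_mem_iff]
  rw [eventually_all_finite hR]
  intro α hα
  rcases (hP α hα).lt_or_eq with hlt | heq
  · have hcont : Continuous fun ε : ℝ ↦ ‖innerₗ V α (P + ε • v)‖ := by
      simp only [innerₗ_apply_apply]
      fun_prop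
    exact (hcont.tendsto' 0 _ (by simp)).eventually_le_const hlt
  · refine Eventually.of_forall fun ε ↦ ?_
    simpa [inner_add_right, inner_smul_right, hv α hα heq] using hP α hα

lemma eq_zero_of_mem_extremePoints_polar {R : Set V} (hR : R.Finite) {P v : V}
    (hP : P ∈ ((innerₗ V).polar R).extremePoints ℝ)
    (hv : ∀ α ∈ R, |⟪α, P⟫| = 1 → ⟪α, v⟫ = 0) : v = 0 := by
  have hadd := eventually_add_smul_mem_polar hR hP.1 hv
  have hsub : ∀ᶠ ε : ℝ in 𝓝 0, P + (-ε) • v ∈ (innerₗ V).polar R :=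
    (continuous_neg.tendsto' 0 0 neg_zero).eventually hadd
  obtain ⟨ε, ⟨hε_add, hε_sub⟩, hε⟩ :=
    (((hadd.and hsub).filter_mono nhdsWithin_le_nhds).and
      (self_mem_nhdsWithin : {(0 : ℝ)}ᶜ ∈ 𝓝[≠] 0)).exists
  have hseg : P ∈ openSegment ℝ (P + ε • v) (P + (-ε) • v) :=
    ⟨1 / 2, 1 / 2, by norm_num, by norm_num, by norm_num, by module⟩
  exact (smul_eq_zero.1 (add_eq_left.1 (hP.2 hε_add hε_sub hseg))).resolve_left hε

theorem mem_extremePoints_polar_iff {R : Set V} (hR : R.Finite) {P : V} :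
    P ∈ ((innerₗ V).polar R).extremePoints ℝ ↔
      P ∈ (innerₗ V).polar R ∧ Submodule.span ℝ {α ∈ R | |⟪α, P⟫| = 1} = ⊤ := by
  have : FiniteDimensional ℝ (Submodule.span ℝ {α ∈ R | |⟪α, P⟫| = 1}) :=
    .span_of_finite ℝ (hR.subset (sep_subset _ _))
  rw [← Submodule.orthogonal_eq_bot_iff, Submodule.eq_bot_iff]
  simp only [mem_orthogonal_span_iff]
  constructor
  · exact fun hP ↦ ⟨hP.1, fun v hv ↦
      eq_zero_of_mem_extremePoints_polar hR hP fun α hα hact ↦ hv α ⟨hα, hact⟩⟩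
  · rintro ⟨hP, hspan⟩
    refine ⟨hP, fun x hx y hy hseg ↦ sub_eq_zero.1 (hspan _ fun α ⟨hα, hact⟩ ↦ ?_)⟩
    rw [inner_sub_right, sub_eq_zero]
    exact inner_eq_of_mem_openSegment hact (hx α hα) (hy α hα) hseg

end Polyhedron

section Reflection

lemma reflection_orthogonal_span_singleton_apply (u x : V) :
    (ℝ ∙ u)ᗮ.reflection x = x - (2 * ⟪u, x⟫ / ⟪u, u⟫) • u := by
  rw [Submodule.reflection_orthogonal_apply, Submodule.reflection_singleton_apply,
    real_inner_self_eq_norm_sq, mul_div_assoc, mul_smul, two_smul, two_smul, neg_sub]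
  rfl

lemma inner_reflection_orthogonal_span_singleton (u x : V) :
    ⟪(ℝ ∙ u)ᗮ.reflection x, u⟫ = -⟪x, u⟫ := by
  rw [← LinearIsometryEquiv.inner_map_map (ℝ ∙ u)ᗮ.reflection, Submodule.reflection_reflection,
    Submodule.reflection_orthogonalComplement_singleton_eq_neg, inner_neg_right]

lemma mem_span_or_mem_orthogonal_of_mapsTo_reflection {F : Set V} {u : V}
    (hF : MapsTo (ℝ ∙ u)ᗮ.reflection F F) :
    u ∈ Submodule.span ℝ F ∨ u ∈ (Submodule.span ℝ F)ᗮ := by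
  by_cases horth : ∀ γ ∈ F, ⟪γ, u⟫ = 0
  · exact .inr (mem_orthogonal_span_iff.2 horth)
  · left
    push Not at horth
    obtain ⟨γ, hγ, hne⟩ := horth
    have hu : u ≠ 0 := by
      rintro rfl
      exact hne (inner_zero_right γ)
    have hmem : (2 * ⟪u, γ⟫ / ⟪u, u⟫) • u ∈ Submodule.span ℝ F := by
      have := sub_mem (Submodule.subset_span hγ) (Submodule.subset_span (R := ℝ) (hF hγ))
      rwa [reflection_orthogonal_span_singleton_apply, sub_sub_cancel] at this
    refine (Submodule.smul_mem_iff _ (div_ne_zero (mul_ne_zero two_ne_zero ?_) ?_)).1 hmem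
    · rwa [real_inner_comm]
    · exact inner_self_ne_zero.2 hu

end Reflection

section OrthogonalDecomposition

/-- The vectors `v s`, `s ∈ U`, split into two nonempty mutually orthogonal parts. For the vertices
of a Dynkin diagram, with `U` nonempty, this says that the full subdiagram on `U` is not connected.
The parts consist of indices rather than vectors. -/
def IsOrthogonallyDecomposable (v : ι → V) (U : Set ι) : Prop :=
  ∃ S T : Set ι, S ∪ T = U ∧ S.Nonempty ∧ T.Nonempty ∧ Disjoint S T ∧
    ∀ s ∈ S, ∀ t ∈ T, ⟪v s, v t⟫ = 0

lemma isOrthogonallyDecomposable_iff_of_mem {v : ι → V} {U : Set ι} {u : ι} (hu : u ∈ U) :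
    IsOrthogonallyDecomposable v U ↔
      ∃ T ⊆ U, T.Nonempty ∧ u ∉ T ∧ ∀ s ∈ U \ T, ∀ t ∈ T, ⟪v s, v t⟫ = 0 := by
  constructor
  · rintro ⟨S, T, rfl, hS, hT, hdisj, horth⟩
    rcases hu with huS | huT
    · refine ⟨T, subset_union_right, hT, disjoint_left.1 hdisj huS, ?_⟩
      rwa [union_sdiff_cancel_right hdisj.le_bot]
    · refine ⟨S, subset_union_left, hS, disjoint_right.1 hdisj huT, ?_⟩
      rw [union_sdiff_cancel_left hdisj.le_bot]
      exact fun t ht s hs ↦ by rw [real_inner_comm, horth s hs t ht]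
  · rintro ⟨T, hTU, hT, huT, horth⟩
    exact ⟨U \ T, T, sdiff_union_of_subset hTU, ⟨u, hu, huT⟩, hT, disjoint_sdiff_left, horth⟩

lemma forall_mem_of_not_isOrthogonallyDecomposable {v : ι → V} {U : Set ι} {K : Submodule ℝ V}
    (hU : ¬IsOrthogonallyDecomposable v U) (hK : ∀ s ∈ U, v s ∈ K ∨ v s ∈ Kᗮ)
    {u : ι} (hu : u ∈ U) (huK : v u ∈ K) : ∀ s ∈ U, v s ∈ K := by
  by_contra! ⟨s, hs, hsK⟩
  refine hU ((isOrthogonallyDecomposable_iff_of_mem hu).2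
    ⟨{t ∈ U | v t ∉ K}, sep_subset _ _, ⟨s, hs, hsK⟩, fun h ↦ h.2 huK, ?_⟩)
  rintro s ⟨hs, hsT⟩ t ⟨ht, htK⟩
  exact (hK t ht).resolve_left htK (v s) (by_contra fun hsK ↦ hsT ⟨hs, hsK⟩)

end OrthogonalDecomposition

lemma span_setOf_abs_eq {E : Type*} [AddCommGroup E] [Module ℝ E] {R : Set E}
    (hneg : ∀ α ∈ R, -α ∈ R) {f : E →ₗ[ℝ] ℝ} {c : ℝ} (hc : 0 ≤ c) :
    Submodule.span ℝ {α ∈ R | |f α| = c} = Submodule.span ℝ {α ∈ R | f α = c} := by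
  refine le_antisymm (Submodule.span_le.2 ?_) (Submodule.span_mono ?_)
  · rintro α ⟨hα, hfα⟩
    rcases (abs_eq hc).1 hfα with hpos | hneg_eq
    · exact Submodule.subset_span ⟨hα, hpos⟩
    · refine neg_mem_iff.1 (Submodule.subset_span ⟨hneg α hα, ?_⟩)
      rw [map_neg, hneg_eq, neg_neg]
  · rintro α ⟨hα, hfα⟩
    exact ⟨hα, by rw [hfα, abs_of_nonneg hc]⟩

section Basis

variable (b : Basis ι ℝ V)

lemma repr_reflection_of_ne {i j : ι} (hij : j ≠ i) (x : V) :
    b.repr ((ℝ ∙ b j)ᗮ.reflection x) i = b.repr x i := by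
  simp [reflection_orthogonal_span_singleton_apply, Finsupp.single_eq_of_ne' hij]

lemma sumCoords_lt_sumCoords_reflection {j : ι} {x : V} (hx : ⟪x, b j⟫ < 0) :
    b.sumCoords x < b.sumCoords ((ℝ ∙ b j)ᗮ.reflection x) := by
  rw [reflection_orthogonal_span_singleton_apply, map_sub, map_smul, b.sumCoords_self_apply,
    smul_eq_mul, mul_one, lt_sub_iff_add_lt, add_lt_iff_neg_left, real_inner_comm]
  exact div_neg_of_neg_of_pos (by linarith) (real_inner_self_pos.2 (b.ne_zero j))

lemma inner_eq_repr_of_forall_inner_eq_ite [DecidableEq ι] {i : ι} {ω : V}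
    (hω : ∀ j, ⟪b j, ω⟫ = if i = j then (1 : ℝ) else 0) (x : V) : ⟪x, ω⟫ = b.repr x i := by
  suffices (innerₗ V).flip ω = b.coord i from LinearMap.congr_fun this x
  refine b.ext fun j ↦ ?_
  rw [LinearMap.flip_apply, innerₗ_apply_apply, hω, b.coord_apply, b.repr_self_apply]
  simp only [eq_comm]

lemma inner_eq_zero_of_repr_nonneg_of_inner_nonpos [Finite ι] {T : Set ι} {x : V}
    (hnonneg : ∀ t ∈ T, 0 ≤ b.repr x t) (hnonpos : ∀ t ∈ T, ⟪x, b t⟫ ≤ 0)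
    (horth : ∀ s ∉ T, b.repr x s ≠ 0 → ∀ t ∈ T, ⟪b s, b t⟫ = 0) :
    ∀ t ∈ T, ⟪x, b t⟫ = 0 := by
  classical
  cases nonempty_fintype ι
  set y := ∑ t with t ∈ T, b.repr x t • b t with hy
  have hxy : ∀ t ∈ T, ⟪x, b t⟫ = ⟪y, b t⟫ := by
    intro t ht
    conv_lhs => rw [← b.sum_repr x]
    rw [hy, sum_inner, sum_inner, Finset.sum_filter_of_ne]
    intro s _ hne
    contrapose! hne
    rw [real_inner_smul_left, mul_eq_zero, or_iff_not_imp_left]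
    exact fun hs ↦ horth s hne hs t ht
  have hyy : ⟪y, y⟫ ≤ 0 := by
    calc ⟪y, y⟫ = ∑ t with t ∈ T, b.repr x t * ⟪x, b t⟫ := by
          nth_rw 2 [hy]
          rw [inner_sum]
          refine Finset.sum_congr rfl fun t ht ↦ ?_
          rw [real_inner_smul_right, hxy t (Finset.mem_filter.1 ht).2]
      _ ≤ 0 := Finset.sum_nonpos fun t ht ↦
          have ht := (Finset.mem_filter.1 ht).2
          mul_nonpos_of_nonneg_of_nonpos (hnonneg t ht) (hnonpos t ht)
  have hy0 : y = 0 := inner_self_eq_zero.1 (hyy.antisymm real_inner_self_nonneg)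
  intro t ht
  rw [hxy t ht, hy0, inner_zero_left]

lemma inner_eq_zero_of_mapsTo_reflection [Finite ι] {F : Set V} (hF : F.Finite) {T : Set ι} {β : V}
    (hrefl : ∀ t ∈ T, MapsTo (ℝ ∙ b t)ᗮ.reflection F F)
    (hle : ∀ γ ∈ F, ∀ t ∈ T, b.repr γ t ≤ b.repr β t)
    (horth : ∀ γ ∈ F, ∀ s ∉ T, b.repr γ s ≠ b.repr β s → ∀ t ∈ T, ⟪b s, b t⟫ = 0)
    (hβ : ∀ t ∈ T, ⟪β, b t⟫ = 0) : ∀ γ ∈ F, ∀ t ∈ T, ⟪γ, b t⟫ = 0 := by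
  by_contra! hcounter
  obtain ⟨γ, ⟨hγ, t₀, ht₀, hne⟩, hmax⟩ :=
    (hF.subset (sep_subset F fun γ ↦ ∃ t ∈ T, ⟪γ, b t⟫ ≠ 0)).exists_maximalFor b.sumCoords _
      hcounter
  have hdominant : ∀ t ∈ T, 0 ≤ ⟪γ, b t⟫ := by
    by_contra! ⟨t, ht, hneg⟩
    have hreflγ : (ℝ ∙ b t)ᗮ.reflection γ ∈ {γ ∈ F | ∃ t ∈ T, ⟪γ, b t⟫ ≠ 0} := by
      refine ⟨hrefl t ht hγ, t, ht, ?_⟩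
      rw [inner_reflection_orthogonal_span_singleton]
      exact neg_ne_zero.2 hneg.ne
    have hlt := sumCoords_lt_sumCoords_reflection b hneg
    exact (hmax hreflγ hlt.le).not_gt hlt
  have hsub : ⟪β - γ, b t₀⟫ = 0 := by
    refine inner_eq_zero_of_repr_nonneg_of_inner_nonpos b ?_ ?_ ?_ t₀ ht₀
    · intro t ht
      simpa using hle γ hγ t ht
    · intro t ht
      simpa [inner_sub_left, hβ t ht] using hdominant t ht
    · intro s hs hne
      exact horth γ hγ s hs fun heq ↦ hne (by simp [heq])
  rw [inner_sub_left, hβ t₀ ht₀, zero_sub, neg_eq_zero] at hsub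
  exact hne hsub

lemma span_eq_top_of_not_isOrthogonallyDecomposable [Finite ι] {F : Set V} {β : V} {i : ι}
    (hrefl : ∀ j ≠ i, MapsTo (ℝ ∙ b j)ᗮ.reflection F F) (hβ : β ∈ F) (hβi : b.repr β i ≠ 0)
    (hconn : ¬IsOrthogonallyDecomposable (fun s : Option ι ↦ s.elim (-β) b) {some i}ᶜ) :
    Submodule.span ℝ F = ⊤ := by
  classical
  cases nonempty_fintype ι
  have hβspan : β ∈ Submodule.span ℝ F := Submodule.subset_span hβ
  have hmem : ∀ s ∈ ({some i}ᶜ : Set (Option ι)), s.elim (-β) b ∈ Submodule.span ℝ F := by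
    refine forall_mem_of_not_isOrthogonallyDecomposable hconn ?_ (u := none) (by simp)
      (neg_mem hβspan)
    rintro (_ | j) hj
    · exact .inl (neg_mem hβspan)
    · exact mem_span_or_mem_orthogonal_of_mapsTo_reflection (hrefl j (by simpa using hj))
  have hmem_ne : ∀ j ≠ i, b j ∈ Submodule.span ℝ F := fun j hj ↦ hmem (some j) (by simpa using hj)
  have hmem_i : b i ∈ Submodule.span ℝ F := by
    refine (Submodule.smul_mem_iff _ hβi).1 ?_
    rw [← add_sub_cancel_right (b.repr β i • b i) (∑ j ∈ Finset.univ.erase i, b.repr β j • b j),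
      Finset.univ.add_sum_erase (fun j ↦ b.repr β j • b j) (Finset.mem_univ i), b.sum_repr]
    exact sub_mem hβspan (sum_mem fun j hj ↦
      Submodule.smul_mem _ _ (hmem_ne j (Finset.ne_of_mem_erase hj)))
  rw [eq_top_iff, ← b.span_eq, Submodule.span_le]
  rintro _ ⟨j, rfl⟩
  rcases eq_or_ne j i with rfl | hj
  exacts [hmem_i, hmem_ne j hj]

lemma not_isOrthogonallyDecomposable_of_span_eq_top [Finite ι] {F : Set V} (hF : F.Finite)
    {β : V} {i : ι} (hrefl : ∀ j ≠ i, MapsTo (ℝ ∙ b j)ᗮ.reflection F F)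
    (hle : ∀ γ ∈ F, ∀ j, b.repr γ j ≤ b.repr β j) (heq : ∀ γ ∈ F, b.repr γ i = b.repr β i)
    (hspan : Submodule.span ℝ F = ⊤) :
    ¬IsOrthogonallyDecomposable (fun s : Option ι ↦ s.elim (-β) b) {some i}ᶜ := by
  rw [isOrthogonallyDecomposable_iff_of_mem (u := none) (by simp)]
  rintro ⟨T, hTU, hT, hnone, horth⟩
  have hne : ∀ j, some j ∈ T → j ≠ i := fun j hj ↦ by simpa using hTU hj
  obtain ⟨_ | j, hj⟩ := hT
  · exact hnone hj
  have hFj : ∀ γ ∈ F, ⟪γ, b j⟫ = 0 := by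
    intro γ hγ
    refine inner_eq_zero_of_mapsTo_reflection b hF (T := some ⁻¹' T) (β := β)
      (fun t ht ↦ hrefl t (hne t ht)) (fun γ hγ t _ ↦ hle γ hγ t) ?_ ?_ γ hγ j hj
    · intro γ hγ s hs hsβ t ht
      have hsi : s ≠ i := by
        rintro rfl
        exact hsβ (heq γ hγ)
      exact horth (some s) ⟨by simpa using hsi, hs⟩ (some t) ht
    · intro t ht
      simpa using horth none ⟨by simp, hnone⟩ (some t) ht
  have hbj : b j ∈ (Submodule.span ℝ F)ᗮ := mem_orthogonal_span_iff.2 hFj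
  rw [hspan, Submodule.top_orthogonal_eq_bot] at hbj
  exact b.ne_zero j hbj

theorem span_setOf_repr_eq_top_iff [Finite ι] {R : Set V} (hR : R.Finite) {β : V} {i : ι}
    (hrefl : ∀ j ≠ i, MapsTo (ℝ ∙ b j)ᗮ.reflection R R) (hβ : β ∈ R) (hβi : b.repr β i ≠ 0)
    (hhigh : ∀ α ∈ R, ∀ j, b.repr α j ≤ b.repr β j) :
    Submodule.span ℝ {γ ∈ R | b.repr γ i = b.repr β i} = ⊤ ↔
      ¬IsOrthogonallyDecomposable (fun s : Option ι ↦ s.elim (-β) b) {some i}ᶜ := by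
  have hface : ∀ j ≠ i, MapsTo (ℝ ∙ b j)ᗮ.reflection {γ ∈ R | b.repr γ i = b.repr β i}
      {γ ∈ R | b.repr γ i = b.repr β i} :=
    fun j hj γ ⟨hγ, hγi⟩ ↦ ⟨hrefl j hj hγ, (repr_reflection_of_ne b hj γ).trans hγi⟩
  exact ⟨not_isOrthogonallyDecomposable_of_span_eq_top b (hR.subset (sep_subset _ _)) hface
      (fun γ hγ ↦ hhigh γ hγ.1) (fun γ hγ ↦ hγ.2),
    span_eq_top_of_not_isOrthogonallyDecomposable b hface ⟨hβ, rfl⟩ hβi⟩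

end Basis

theorem stmt_1_general [Finite ι] [DecidableEq ι] (b : Basis ι ℝ V) {R : Set V} (hR : R.Finite)
    (hrefl : ∀ α ∈ R, MapsTo (ℝ ∙ α)ᗮ.reflection R R) (hb : ∀ j, b j ∈ R)
    {β : V} (hβ : β ∈ R) (hhigh : ∀ α ∈ R, ∀ j, b.repr α j ≤ b.repr β j)
    (i : ι) {ω : V} (hω : ∀ j, ⟪b j, ω⟫ = if i = j then (1 : ℝ) else 0) :
    (b.repr β i)⁻¹ • ω ∈ (closure {Y : V | ∀ α ∈ R, |⟪α, Y⟫| < 1}).extremePoints ℝ ↔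
      ¬IsOrthogonallyDecomposable (fun s : Option ι ↦ s.elim (-β) b) {some i}ᶜ := by
  have hneg : ∀ α ∈ R, -α ∈ R := fun α hα ↦
    Submodule.reflection_orthogonalComplement_singleton_eq_neg (𝕜 := ℝ) α ▸ hrefl α hα hα
  have hβi : 0 < b.repr β i := lt_of_lt_of_le (by simp) (hhigh _ (hb i) i)
  have habs_inner : ∀ α, |⟪α, (b.repr β i)⁻¹ • ω⟫| = |b.repr α i| / b.repr β i := fun α ↦ by
    rw [inner_smul_right, inner_eq_repr_of_forall_inner_eq_ite b hω, abs_mul, abs_inv,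
      abs_of_pos hβi, inv_mul_eq_div]
  have hpolar : (b.repr β i)⁻¹ • ω ∈ (innerₗ V).polar R := fun α hα ↦ by
    have hneg_le := hhigh _ (hneg α hα) i
    rw [map_neg, Finsupp.neg_apply] at hneg_le
    rw [innerₗ_apply_apply, Real.norm_eq_abs, habs_inner, div_le_one hβi]
    exact abs_le'.2 ⟨hhigh α hα i, hneg_le⟩
  have hactive : {α ∈ R | |⟪α, (b.repr β i)⁻¹ • ω⟫| = 1} =
      {α ∈ R | |b.coord i α| = b.repr β i} := by
    simp only [habs_inner, div_eq_one_iff_eq hβi.ne', b.coord_apply]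
  rw [closure_setOf_forall_abs_inner_lt_one, mem_extremePoints_polar_iff hR,
    and_iff_right hpolar, hactive, span_setOf_abs_eq hneg hβi.le]
  exact span_setOf_repr_eq_top_iff b hR (fun j _ ↦ hrefl _ (hb j)) hβ hβi.ne' hhigh

end

/-- let `R` be an irreducible reduced crystallographic root system
spanning the inner product space `𝔞` (roots viewed as vectors, `α(Y) = ⟪α, Y⟫`),
with base `a : Fin n → 𝔞`, highest root `β = ∑ kᵢ aᵢ` (`kᵢ ∈ ℤ_{>0}`), fundamental
coweights `ω i` (`⟪a j, ω i⟫ = δᵢⱼ`), and `Ω = {Y : |⟪α,Y⟫| < 1 ∀ α ∈ R}`.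
Then `ωᵢ/kᵢ` is an extreme point of the closure of `Ω` iff the extended Dynkin
diagram (vertices `Π₀ = {α₀ = -β, a 1, …, a n}`, indexed by `Option (Fin n)`,
edges = non-orthogonality) with the vertex `aᵢ` deleted is connected, i.e. the
remaining vertex set admits no partition into two nonempty mutually orthogonal
parts. -/
theorem stmt_1 {𝔞 : Type*} [NormedAddCommGroup 𝔞] [InnerProductSpace ℝ 𝔞]
    [FiniteDimensional ℝ 𝔞]
    (R : Set 𝔞) (hRfin : R.Finite) (hR0 : (0 : 𝔞) ∉ R)
    (hRspan : Submodule.span ℝ R = ⊤)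
    (hRinv : ∀ α ∈ R, ∀ γ ∈ R, γ - (2 * ⟪α, γ⟫ / ⟪α, α⟫) • α ∈ R)
    (hcrys : ∀ α ∈ R, ∀ γ ∈ R, ∃ m : ℤ, (m : ℝ) = 2 * ⟪α, γ⟫ / ⟪α, α⟫)
    (hred : ∀ α ∈ R, ∀ c : ℝ, c • α ∈ R → c = 1 ∨ c = -1)
    (n : ℕ) (a : Fin n → 𝔞) (ha : ∀ i, a i ∈ R)
    (haind : LinearIndependent ℝ a)
    (hbase : ∀ α ∈ R, ∃ c : Fin n → ℤ, ((∀ i, 0 ≤ c i) ∨ (∀ i, c i ≤ 0)) ∧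
        α = ∑ i, (c i : ℝ) • a i)
    (hirr : ¬ ∃ S T : Set (Fin n), S ∪ T = Set.univ ∧ S.Nonempty ∧ T.Nonempty ∧
        Disjoint S T ∧ ∀ s ∈ S, ∀ t ∈ T, ⟪a s, a t⟫ = 0)
    (k : Fin n → ℕ) (hkpos : ∀ i, 0 < k i)
    (β : 𝔞) (hβR : β ∈ R) (hβsum : β = ∑ i, (k i : ℝ) • a i)
    (hhigh : ∀ α ∈ R, ∀ c : Fin n → ℝ, α = ∑ i, c i • a i → ∀ i, c i ≤ (k i : ℝ))
    (ω : Fin n → 𝔞) (hω : ∀ i j, ⟪a j, ω i⟫ = if i = j then (1 : ℝ) else 0)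
    (Ω : Set 𝔞) (hΩ : Ω = {Y : 𝔞 | ∀ α ∈ R, |⟪α, Y⟫| < 1})
    (i : Fin n) :
    ((k i : ℝ)⁻¹ • ω i ∈ Set.extremePoints ℝ (closure Ω)) ↔
    ¬ ∃ S T : Set (Option (Fin n)),
        S ∪ T = {j : Option (Fin n) | j ≠ some i} ∧ S.Nonempty ∧ T.Nonempty ∧
        Disjoint S T ∧
        ∀ s ∈ S, ∀ t ∈ T, ⟪s.elim (-β) a, t.elim (-β) a⟫ = 0 := by
  have hspan : ⊤ ≤ Submodule.span ℝ (range a) := hRspan ▸ Submodule.span_le.2 fun α hα ↦ by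
    obtain ⟨c, -, rfl⟩ := hbase α hα
    exact sum_mem fun j _ ↦ Submodule.smul_mem _ _ (Submodule.subset_span ⟨j, rfl⟩)
  let b := Basis.mk haind hspan
  have hb : ⇑b = a := Basis.coe_mk haind hspan
  have hβrepr : ∀ j, b.repr β j = k j := fun j ↦ by
    rw [hβsum, ← hb, b.repr_sum_self]
  have hhigh_repr : ∀ α ∈ R, ∀ j, b.repr α j ≤ b.repr β j := fun α hα j ↦
    hβrepr j ▸ hhigh α hα (b.repr α) (hb ▸ (b.sum_repr α).symm) j
  have hrefl : ∀ α ∈ R, MapsTo (ℝ ∙ α)ᗮ.reflection R R := fun α hα γ hγ ↦ by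
    rw [reflection_orthogonal_span_singleton_apply]
    exact hRinv α hα γ hγ
  rw [hΩ, ← hβrepr i, ← hb]
  exact stmt_1_general b hRfin hrefl (hb ▸ ha) hβR hhigh_repr i (hb ▸ hω i)
end

section
/- If k_i = 1 (i.e. the fundamental coweight ω_i is minuscule), then ω_i is an extreme point of the closure of Ω. Consequently the minuscule part ∂_mΩ = W·{ω_i : k_i = 1} of the boundary of Ω is contained in the set ∂_eΩ of extreme points of the closure of Ω. -/
open scoped RealInnerProductSpace

/-!
A point `x` of the polyhedron `{Y | ∀ α ∈ R, |⟪α, Y⟫| ≤ 1}` is extreme as soon as the `α ∈ R`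
with `⟪α, x⟫ = 1` span the space. For a minuscule coweight `ω i` the span `M` of these roots
contains `a i`. If `γ` is one of them and `j ≠ i`, then so is the reflection of `γ` in `a j`, since
`⟪a j, ω i⟫ = 0`; subtracting, either `a j ∈ M` or `a j ⟂ γ`. Hence every simple root lies in `M`
or in `Mᗮ`, and irreducibility forces `M` to be everything. The Weyl group permutes `R`, so it acts
on the polyhedron by linear automorphisms and permutes its extreme points.
-/

section

variable {E ι : Type*} [NormedAddCommGroup E] [InnerProductSpace ℝ E]

lemma isClosed_polar_innerₗ (R : Set E) : IsClosed ((innerₗ E).polar R) := by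
  rw [LinearMap.polar_eq_iInter]
  refine isClosed_biInter fun α _ ↦ isClosed_le ?_ continuous_const
  simp only [innerₗ_apply_apply]
  fun_prop

lemma closure_setOf_abs_inner_lt_one (R : Set E) :
    closure {Y : E | ∀ α ∈ R, |⟪α, Y⟫| < 1} = (innerₗ E).polar R := by
  apply Set.Subset.antisymm
  · exact closure_minimal (fun Y hY α hα ↦ (hY α hα).le) (isClosed_polar_innerₗ R)
  · intro Y hY
    have segment_subset : openSegment ℝ 0 Y ⊆ {Z | ∀ α ∈ R, |⟪α, Z⟫| < 1} := by
      rintro _ ⟨s, t, hs, ht, hst, rfl⟩ α hα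
      have ht_lt : t < 1 := by linarith
      calc |⟪α, s • (0 : E) + t • Y⟫| = t * |⟪α, Y⟫| := by
            rw [smul_zero, zero_add, real_inner_smul_right, abs_mul, abs_of_pos ht]
        _ ≤ t * 1 := by gcongr; exact hY α hα
        _ < 1 := by rwa [mul_one]
    exact closure_mono segment_subset
      (segment_subset_closure_openSegment (right_mem_segment ℝ 0 Y))

lemma image_polar_innerₗ (e : E ≃ₗᵢ[ℝ] E) (R : Set E) :
    e '' (innerₗ E).polar R = (innerₗ E).polar (e '' R) := by
  ext y
  obtain ⟨x, rfl⟩ := e.surjective y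
  simp [LinearMap.polar_mem_iff, e.injective.mem_set_image]

lemma map_mem_extremePoints_polar {e : E ≃ₗᵢ[ℝ] E} {R : Set E} (he : e '' R = R) {x : E}
    (hx : x ∈ ((innerₗ E).polar R).extremePoints ℝ) :
    e x ∈ ((innerₗ E).polar R).extremePoints ℝ := by
  have himage : e '' ((innerₗ E).polar R).extremePoints ℝ
      = ((innerₗ E).polar R).extremePoints ℝ := by
    rw [image_extremePoints, image_polar_innerₗ, he]
  exact himage ▸ Set.mem_image_of_mem e hx

/-- The `α ∈ R` whose inequality `⟪α, Y⟫ ≤ 1` is tight at `x`, used to detect vertices of the polar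
of `R`. The inequalities `-1 ≤ ⟪α, Y⟫` are left out: for `R = -R` they are those of `-α`. -/
def tightSet (R : Set E) (x : E) : Set E := {α ∈ R | ⟪α, x⟫ = 1}

lemma mem_extremePoints_polar_of_span_tightSet {R : Set E} {x : E}
    (hx : x ∈ (innerₗ E).polar R) (hspan : Submodule.span ℝ (tightSet R x) = ⊤) :
    x ∈ ((innerₗ E).polar R).extremePoints ℝ := by
  rw [mem_extremePoints_iff_left]
  refine ⟨hx, fun y hy z hz ⟨s, t, hs, ht, hst, hsum⟩ ↦ ?_⟩
  have inner_eq_on_tight : Set.EqOn (innerₗ E y) (innerₗ E x) (tightSet R x) := by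
    rintro α ⟨hα, hαx⟩
    have hy_le : ⟪α, y⟫ ≤ 1 := (abs_le.1 (hy α hα)).2
    have hz_le : ⟪α, z⟫ ≤ 1 := (abs_le.1 (hz α hα)).2
    have hconvex : s * ⟪α, y⟫ + t * ⟪α, z⟫ = 1 := by
      rw [← hαx, ← hsum, inner_add_right, real_inner_smul_right, real_inner_smul_right]
    have hαy : ⟪α, y⟫ = 1 := by nlinarith
    rw [innerₗ_apply_apply, innerₗ_apply_apply, real_inner_comm, hαy, real_inner_comm, hαx]
  have inner_eq : innerₗ E y = innerₗ E x := LinearMap.ext_on hspan inner_eq_on_tight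
  exact ext_inner_right ℝ (DFunLike.congr_fun inner_eq)

lemma reflection_orthogonal_singleton_apply (α v : E) :
    (ℝ ∙ α)ᗮ.reflection v = v - (2 * ⟪α, v⟫ / ⟪α, α⟫) • α := by
  rw [Submodule.reflection_orthogonal_apply, Submodule.reflection_singleton_apply,
    real_inner_self_eq_norm_sq, RCLike.ofReal_real_eq_id, id]
  module

/-- Stability of a set of vectors under the reflections in the hyperplanes orthogonal to its
elements. The zero vector is allowed: it gives the identity. -/
def IsReflectionStable (R : Set E) : Prop :=
  ∀ α ∈ R, Set.MapsTo (ℝ ∙ α)ᗮ.reflection R R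

lemma isReflectionStable_iff {R : Set E} :
    IsReflectionStable R ↔ ∀ α ∈ R, ∀ γ ∈ R, γ - (2 * ⟪α, γ⟫ / ⟪α, α⟫) • α ∈ R := by
  simp only [IsReflectionStable, Set.MapsTo, reflection_orthogonal_singleton_apply]

/-- The group generated by the reflections in the hyperplanes orthogonal to the elements of `R`,
acting by linear isometries. -/
def weylGroup (R : Set E) : Subgroup (E ≃ₗᵢ[ℝ] E) :=
  Subgroup.closure {s | ∃ α ∈ R, s = (ℝ ∙ α)ᗮ.reflection}

lemma exists_mem_weylGroup_coe_eq {R : Set E} {w : Function.End E}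
    (hw : w ∈ Submonoid.closure
      {f : Function.End E | ∃ α ∈ R, f = fun v => v - (2 * ⟪α, v⟫ / ⟪α, α⟫) • α}) :
    ∃ g ∈ weylGroup R, (g : E → E) = w := by
  induction hw using Submonoid.closure_induction with
  | mem f hf =>
    obtain ⟨α, hα, rfl⟩ := hf
    exact ⟨_, Subgroup.subset_closure ⟨α, hα, rfl⟩,
      funext (reflection_orthogonal_singleton_apply α)⟩
  | one => exact ⟨1, one_mem _, rfl⟩
  | mul _ _ _ _ ihf ihg =>
    obtain ⟨f, hf, rfl⟩ := ihf
    obtain ⟨g, hg, rfl⟩ := ihg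
    exact ⟨f * g, mul_mem hf hg, rfl⟩

namespace IsReflectionStable

variable {R : Set E}

lemma reflection_image_eq (hR : IsReflectionStable R) {α : E} (hα : α ∈ R) :
    (ℝ ∙ α)ᗮ.reflection '' R = R :=
  (hR α hα).image_subset.antisymm fun γ hγ ↦
    ⟨_, hR α hα hγ, Submodule.reflection_reflection _ γ⟩

lemma image_eq_of_mem_weylGroup (hR : IsReflectionStable R) {w : E ≃ₗᵢ[ℝ] E}
    (hw : w ∈ weylGroup R) : w '' R = R := by
  induction hw using Subgroup.closure_induction with
  | mem s hs =>
    obtain ⟨α, hα, rfl⟩ := hs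
    exact hR.reflection_image_eq hα
  | one => exact Set.image_id R
  | mul f g _ _ ihf ihg => rw [LinearIsometryEquiv.coe_mul, Set.image_comp, ihg, ihf]
  | inv f _ ih =>
    nth_rewrite 1 [← ih]
    exact f.toEquiv.symm_image_image R

lemma neg_mem (hR : IsReflectionStable R) {α : E} (hα : α ∈ R) : -α ∈ R :=
  Submodule.reflection_orthogonalComplement_singleton_eq_neg (𝕜 := ℝ) α ▸ hR α hα hα

lemma mem_polar_of_inner_le_one (hR : IsReflectionStable R) {x : E}
    (hx : ∀ α ∈ R, ⟪α, x⟫ ≤ 1) : x ∈ (innerₗ E).polar R := by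
  intro α hα
  have hneg : -⟪α, x⟫ ≤ 1 := inner_neg_left (𝕜 := ℝ) α x ▸ hx (-α) (hR.neg_mem hα)
  exact abs_le'.2 ⟨hx α hα, hneg⟩

lemma mem_span_tightSet_of_inner_ne_zero (hR : IsReflectionStable R) {α γ x : E} (hα : α ∈ R)
    (hαx : ⟪α, x⟫ = 0) (hγ : γ ∈ tightSet R x) (hαγ : ⟪α, γ⟫ ≠ 0) :
    α ∈ Submodule.span ℝ (tightSet R x) := by
  have hα_sq : ⟪α, α⟫ ≠ 0 :=
    inner_self_ne_zero.2 fun hα_zero ↦ hαγ (by rw [hα_zero, inner_zero_left])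
  have hcoeff : 2 * ⟪α, γ⟫ / ⟪α, α⟫ ≠ 0 := div_ne_zero (mul_ne_zero two_ne_zero hαγ) hα_sq
  have hreflection : (ℝ ∙ α)ᗮ.reflection γ ∈ tightSet R x := by
    refine ⟨hR α hα hγ.1, ?_⟩
    rw [reflection_orthogonal_singleton_apply, inner_sub_left, real_inner_smul_left, hαx,
      mul_zero, sub_zero, hγ.2]
  have hdiff : γ - (ℝ ∙ α)ᗮ.reflection γ ∈ Submodule.span ℝ (tightSet R x) :=
    Submodule.sub_mem _ (Submodule.subset_span hγ) (Submodule.subset_span hreflection)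
  rw [reflection_orthogonal_singleton_apply, sub_sub_cancel] at hdiff
  exact (Submodule.smul_mem_iff _ hcoeff).1 hdiff

lemma mem_span_tightSet_or_mem_orthogonal (hR : IsReflectionStable R) {α x : E} (hα : α ∈ R)
    (hαx : ⟪α, x⟫ = 0) :
    α ∈ Submodule.span ℝ (tightSet R x) ∨ α ∈ (Submodule.span ℝ (tightSet R x))ᗮ := by
  refine or_iff_not_imp_left.2 fun hα_notMem ↦ ?_
  have tight_le : Submodule.span ℝ (tightSet R x) ≤ (ℝ ∙ α)ᗮ := by
    refine Submodule.span_le.2 fun γ hγ ↦ Submodule.mem_orthogonal_singleton_iff_inner_right.2 ?_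
    by_contra hαγ
    exact hα_notMem (hR.mem_span_tightSet_of_inner_ne_zero hα hαx hγ hαγ)
  exact Submodule.orthogonal_le tight_le
    (Submodule.le_orthogonal_orthogonal _ (Submodule.mem_span_singleton_self α))

end IsReflectionStable

/-- Irreducibility of a base, i.e. connectedness of its Dynkin diagram: the family cannot be split
into two nonempty mutually orthogonal parts. -/
def IsOrthogonallyIndecomposable (a : ι → E) : Prop :=
  ¬ ∃ S T : Set ι, S ∪ T = Set.univ ∧ S.Nonempty ∧ T.Nonempty ∧
    Disjoint S T ∧ ∀ s ∈ S, ∀ t ∈ T, ⟪a s, a t⟫ = 0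

lemma IsOrthogonallyIndecomposable.forall_mem {a : ι → E} (ha : IsOrthogonallyIndecomposable a)
    {M : Submodule ℝ E} {i : ι} (hi : a i ∈ M) (hM : ∀ j, a j ∈ M ∨ a j ∈ Mᗮ) (j : ι) :
    a j ∈ M := by
  by_contra hj
  exact ha ⟨{s | a s ∈ M}, {s | a s ∈ M}ᶜ, Set.union_compl_self _, ⟨i, hi⟩, ⟨j, hj⟩,
    disjoint_compl_right, fun s hs t ht ↦
      Submodule.inner_right_of_mem_orthogonal hs ((hM t).resolve_left ht)⟩

lemma span_range_eq_top_of_forall_eq_sum [Fintype ι] {R : Set E} {a : ι → E}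
    (hRspan : Submodule.span ℝ R = ⊤) (hR : ∀ α ∈ R, ∃ c : ι → ℝ, α = ∑ i, c i • a i) :
    Submodule.span ℝ (Set.range a) = ⊤ := by
  rw [eq_top_iff, ← hRspan, Submodule.span_le]
  intro α hα
  obtain ⟨c, rfl⟩ := hR α hα
  exact (Submodule.mem_span_range_iff_exists_fun ℝ).2 ⟨c, rfl⟩

variable [DecidableEq ι] {a ω : ι → E}

lemma span_tightSet_coweight_eq_top {R : Set E} (hR : IsReflectionStable R)
    (ha : ∀ i, a i ∈ R) (haspan : Submodule.span ℝ (Set.range a) = ⊤)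
    (hirr : IsOrthogonallyIndecomposable a)
    (hω : ∀ i j, ⟪a j, ω i⟫ = if i = j then (1 : ℝ) else 0) (i : ι) :
    Submodule.span ℝ (tightSet R (ω i)) = ⊤ := by
  have hi : a i ∈ Submodule.span ℝ (tightSet R (ω i)) :=
    Submodule.subset_span ⟨ha i, by rw [hω, if_pos rfl]⟩
  have mem_or_orthogonal (j : ι) : a j ∈ Submodule.span ℝ (tightSet R (ω i)) ∨
      a j ∈ (Submodule.span ℝ (tightSet R (ω i)))ᗮ := by
    obtain rfl | hij := eq_or_ne i j
    · exact .inl hi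
    · exact hR.mem_span_tightSet_or_mem_orthogonal (ha j) (by rw [hω, if_neg hij])
  rw [eq_top_iff, ← haspan, Submodule.span_le, Set.range_subset_iff]
  exact hirr.forall_mem hi mem_or_orthogonal

lemma inner_sum_smul_coweight [Fintype ι]
    (hω : ∀ i j, ⟪a j, ω i⟫ = if i = j then (1 : ℝ) else 0) (c : ι → ℝ) (i : ι) :
    ⟪∑ j, c j • a j, ω i⟫ = c i := by
  simp [sum_inner, real_inner_smul_left, hω]

lemma inner_coweight_le_of_coeff_le [Fintype ι]
    (hω : ∀ i j, ⟪a j, ω i⟫ = if i = j then (1 : ℝ) else 0) {α : E}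
    (hα : α ∈ Submodule.span ℝ (Set.range a)) {i : ι} {b : ℝ}
    (hcoeff : ∀ c : ι → ℝ, α = ∑ j, c j • a j → c i ≤ b) : ⟪α, ω i⟫ ≤ b := by
  obtain ⟨c, rfl⟩ := (Submodule.mem_span_range_iff_exists_fun ℝ).1 hα
  exact (inner_sum_smul_coweight hω c i).trans_le (hcoeff c rfl)

/-- `⟪α, ω i⟫` is the coefficient of `a i` in `α`, so `hi` says that `ω i` is minuscule. -/
theorem stmt_2_general {R : Set E} (hR : IsReflectionStable R) (ha : ∀ i, a i ∈ R)
    (haspan : Submodule.span ℝ (Set.range a) = ⊤) (hirr : IsOrthogonallyIndecomposable a)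
    (hω : ∀ i j, ⟪a j, ω i⟫ = if i = j then (1 : ℝ) else 0) (i : ι)
    (hi : ∀ α ∈ R, ⟪α, ω i⟫ ≤ 1) {w : E ≃ₗᵢ[ℝ] E} (hw : w ∈ weylGroup R) :
    w (ω i) ∈ Set.extremePoints ℝ (closure {Y : E | ∀ α ∈ R, |⟪α, Y⟫| < 1}) := by
  rw [closure_setOf_abs_inner_lt_one]
  exact map_mem_extremePoints_polar (hR.image_eq_of_mem_weylGroup hw)
    (mem_extremePoints_polar_of_span_tightSet (hR.mem_polar_of_inner_le_one hi)
      (span_tightSet_coweight_eq_top hR ha haspan hirr hω i))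

end

/-- in the setting of an irreducible reduced crystallographic root
system `R` spanning `𝔞`, with base `a`, highest root `β = ∑ kᵢ aᵢ`, fundamental
coweights `ω i` and polyhedron `Ω = {Y : |⟪α,Y⟫| < 1 ∀ α ∈ R}`: if `k i = 1`
(i.e. `ω i` is minuscule) then `ω i` is an extreme point of the closure of `Ω`;
consequently the minuscule part `∂ₘΩ = W·{ωᵢ : kᵢ = 1}` of the boundary (the Weyl
group `W` realized as the monoid generated by the root reflections, which are
involutions) is contained in the set `∂ₑΩ` of extreme points of the closure of `Ω`. -/
theorem stmt_2 {𝔞 : Type*} [NormedAddCommGroup 𝔞] [InnerProductSpace ℝ 𝔞]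
    [FiniteDimensional ℝ 𝔞]
    (R : Set 𝔞) (hRfin : R.Finite) (hR0 : (0 : 𝔞) ∉ R)
    (hRspan : Submodule.span ℝ R = ⊤)
    (hRinv : ∀ α ∈ R, ∀ γ ∈ R, γ - (2 * ⟪α, γ⟫ / ⟪α, α⟫) • α ∈ R)
    (hcrys : ∀ α ∈ R, ∀ γ ∈ R, ∃ m : ℤ, (m : ℝ) = 2 * ⟪α, γ⟫ / ⟪α, α⟫)
    (hred : ∀ α ∈ R, ∀ c : ℝ, c • α ∈ R → c = 1 ∨ c = -1)
    (n : ℕ) (a : Fin n → 𝔞) (ha : ∀ i, a i ∈ R)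
    (haind : LinearIndependent ℝ a)
    (hbase : ∀ α ∈ R, ∃ c : Fin n → ℤ, ((∀ i, 0 ≤ c i) ∨ (∀ i, c i ≤ 0)) ∧
        α = ∑ i, (c i : ℝ) • a i)
    (hirr : ¬ ∃ S T : Set (Fin n), S ∪ T = Set.univ ∧ S.Nonempty ∧ T.Nonempty ∧
        Disjoint S T ∧ ∀ s ∈ S, ∀ t ∈ T, ⟪a s, a t⟫ = 0)
    (k : Fin n → ℕ) (hkpos : ∀ i, 0 < k i)
    (β : 𝔞) (hβR : β ∈ R) (hβsum : β = ∑ i, (k i : ℝ) • a i)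
    (hhigh : ∀ α ∈ R, ∀ c : Fin n → ℝ, α = ∑ i, c i • a i → ∀ i, c i ≤ (k i : ℝ))
    (ω : Fin n → 𝔞) (hω : ∀ i j, ⟪a j, ω i⟫ = if i = j then (1 : ℝ) else 0)
    (Ω : Set 𝔞) (hΩ : Ω = {Y : 𝔞 | ∀ α ∈ R, |⟪α, Y⟫| < 1}) :
    (∀ i : Fin n, k i = 1 → ω i ∈ Set.extremePoints ℝ (closure Ω)) ∧
    (∀ w ∈ Submonoid.closure
        {f : Function.End 𝔞 | ∃ α ∈ R, f = fun v => v - (2 * ⟪α, v⟫ / ⟪α, α⟫) • α},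
      ∀ i : Fin n, k i = 1 → (w : 𝔞 → 𝔞) (ω i) ∈ Set.extremePoints ℝ (closure Ω)) := by
  subst hΩ
  have haspan : Submodule.span ℝ (Set.range a) = ⊤ :=
    span_range_eq_top_of_forall_eq_sum hRspan fun α hα ↦
      (hbase α hα).imp' (fun c i ↦ (c i : ℝ)) fun _ hc ↦ hc.2
  have minuscule (i : Fin n) (hi : k i = 1) (α : 𝔞) (hα : α ∈ R) : ⟪α, ω i⟫ ≤ 1 :=
    inner_coweight_le_of_coeff_le hω (haspan ▸ Submodule.mem_top) fun c hc ↦ by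
      simpa only [hi, Nat.cast_one] using hhigh α hα c hc i
  have extreme {w : 𝔞 ≃ₗᵢ[ℝ] 𝔞} (hw : w ∈ weylGroup R) (i : Fin n) (hi : k i = 1) :=
    stmt_2_general (isReflectionStable_iff.2 hRinv) ha haspan hirr hω i (minuscule i hi) hw
  refine ⟨extreme (one_mem _), fun w hw ↦ ?_⟩
  obtain ⟨g, hg, rfl⟩ := exists_mem_weylGroup_coe_eq hw
  exact extreme hg
end

section
/- For every real t with |t| < π/4 one has the equality of subsets of SL(2,ℂ): {g·n·k : g ∈ SL(2,ℝ), k ∈ SO(2,ℂ)} = {g·a·k : g ∈ SL(2,ℝ), k ∈ SO(2,ℂ)}, where n is the matrix with rows (1, i·sin 2t) and (0, 1), and a is the diagonal matrix diag(e^{it}, e^{−it}). -/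
open Matrix

/-- `SL(2,ℝ)` viewed as the set of real-entried matrices in `SL(2,ℂ)`. -/
def SL2R : Set (Matrix (Fin 2) (Fin 2) ℂ) :=
  {g | g.det = 1 ∧ ∀ i j, (g i j).im = 0}

/-- `SO(2,ℂ) = {k ∈ SL(2,ℂ) : kᵀ·k = 1}`. -/
def SO2C : Set (Matrix (Fin 2) (Fin 2) ℂ) :=
  {k | k.det = 1 ∧ kᵀ * k = 1}

/-!
Two matrices `x`, `y` of determinant `1` lie in the same left coset of `SO(2,ℂ)` exactly when
`x * xᵀ = y * yᵀ`. Hence the double coset of `x` is determined by the symmetric matrix `x * xᵀ` up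
to congruence by `SL(2,ℝ)`. With `c = cos 2t > 0`, the real matrix
`(1/√2) * !![√c, -√c; 1/√c, 1/√c]` carries `a * aᵀ = diag(e^{2it}, e^{-2it})` to
`n * nᵀ = !![c², i sin 2t; i sin 2t, 1]`.
-/

theorem exists_orthogonal_eq_mul_iff {n R : Type*} [Fintype n] [DecidableEq n] [CommRing R]
    {x y : Matrix n n R} (hx : IsUnit x.det) :
    (∃ k : Matrix n n R, kᵀ * k = 1 ∧ y = x * k) ↔ y * yᵀ = x * xᵀ := by
  constructor
  · rintro ⟨k, hk, rfl⟩
    have hk' : k * kᵀ = 1 := mul_eq_one_comm.mp hk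
    rw [transpose_mul, Matrix.mul_assoc, ← Matrix.mul_assoc k, hk', Matrix.one_mul]
  · intro hxy
    refine ⟨x⁻¹ * y, mul_eq_one_comm.mp ?_, (mul_nonsing_inv_cancel_left x y hx).symm⟩
    calc x⁻¹ * y * (x⁻¹ * y)ᵀ
        = x⁻¹ * (y * yᵀ) * (x⁻¹)ᵀ := by simp only [transpose_mul, Matrix.mul_assoc]
      _ = (x⁻¹ * x) * (x⁻¹ * x)ᵀ := by rw [hxy]; simp only [transpose_mul, Matrix.mul_assoc]
      _ = 1 := by rw [nonsing_inv_mul x hx, transpose_one, Matrix.one_mul]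

theorem exists_mem_SO2C_eq_mul_iff {x y : Matrix (Fin 2) (Fin 2) ℂ} (hx : x.det = 1) :
    (∃ k ∈ SO2C, y = x * k) ↔ y.det = 1 ∧ y * yᵀ = x * xᵀ := by
  rw [← exists_orthogonal_eq_mul_iff (hx ▸ isUnit_one)]
  constructor
  · rintro ⟨k, ⟨hdet, hk⟩, rfl⟩
    exact ⟨by rw [det_mul, hx, hdet, one_mul], k, hk, rfl⟩
  · rintro ⟨hdet, k, hk, rfl⟩
    exact ⟨k, ⟨by rwa [det_mul, hx, one_mul] at hdet, hk⟩, rfl⟩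

theorem mul_mem_SL2R {g h : Matrix (Fin 2) (Fin 2) ℂ} (hg : g ∈ SL2R) (hh : h ∈ SL2R) :
    g * h ∈ SL2R := by
  refine ⟨by rw [det_mul, hg.1, hh.1, one_mul], fun i j => ?_⟩
  simp [Matrix.mul_apply, Complex.mul_im, hg.2, hh.2]

theorem inv_mem_SL2R {g : Matrix (Fin 2) (Fin 2) ℂ} (hg : g ∈ SL2R) : g⁻¹ ∈ SL2R := by
  have hinv : g⁻¹ = g.adjugate := by rw [inv_def, hg.1, Ring.inverse_one, one_smul]
  rw [hinv]
  refine ⟨by rw [det_adjugate, hg.1, one_pow], fun i j => ?_⟩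
  fin_cases i <;> fin_cases j <;> simp [adjugate_fin_two, hg.2]

/-- The double coset `SL(2,ℝ) · x · SO(2,ℂ)`, as a set of matrices. -/
def realOrthogonalDoubleCoset (x : Matrix (Fin 2) (Fin 2) ℂ) : Set (Matrix (Fin 2) (Fin 2) ℂ) :=
  {m | ∃ g ∈ SL2R, ∃ k ∈ SO2C, m = g * x * k}

section DoubleCoset

variable {x y : Matrix (Fin 2) (Fin 2) ℂ}

theorem mem_realOrthogonalDoubleCoset_iff {m : Matrix (Fin 2) (Fin 2) ℂ} (hx : x.det = 1) :
    m ∈ realOrthogonalDoubleCoset x ↔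
      m.det = 1 ∧ ∃ g ∈ SL2R, m * mᵀ = g * (x * xᵀ) * gᵀ := by
  have hcoset {g : Matrix (Fin 2) (Fin 2) ℂ} (hg : g ∈ SL2R) :
      (∃ k ∈ SO2C, m = g * x * k) ↔ m.det = 1 ∧ m * mᵀ = g * (x * xᵀ) * gᵀ := by
    rw [exists_mem_SO2C_eq_mul_iff (by rw [det_mul, hg.1, hx, one_mul])]
    simp only [transpose_mul, Matrix.mul_assoc]
  constructor
  · rintro ⟨g, hg, hk⟩
    obtain ⟨hdet, hm⟩ := (hcoset hg).mp hk
    exact ⟨hdet, g, hg, hm⟩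
  · rintro ⟨hdet, g, hg, hm⟩
    exact ⟨g, hg, (hcoset hg).mpr ⟨hdet, hm⟩⟩

theorem realOrthogonalDoubleCoset_subset_of_congruent (hx : x.det = 1) (hy : y.det = 1)
    {g : Matrix (Fin 2) (Fin 2) ℂ} (hg : g ∈ SL2R) (hxy : x * xᵀ = g * (y * yᵀ) * gᵀ) :
    realOrthogonalDoubleCoset x ⊆ realOrthogonalDoubleCoset y := by
  intro m hm
  obtain ⟨hdet, h, hh, hmx⟩ := (mem_realOrthogonalDoubleCoset_iff hx).mp hm
  refine (mem_realOrthogonalDoubleCoset_iff hy).mpr ⟨hdet, h * g, mul_mem_SL2R hh hg, ?_⟩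
  rw [hmx, hxy]
  simp only [transpose_mul, Matrix.mul_assoc]

theorem realOrthogonalDoubleCoset_eq_of_congruent (hx : x.det = 1) (hy : y.det = 1)
    {g : Matrix (Fin 2) (Fin 2) ℂ} (hg : g ∈ SL2R) (hxy : x * xᵀ = g * (y * yᵀ) * gᵀ) :
    realOrthogonalDoubleCoset x = realOrthogonalDoubleCoset y := by
  have hinv : g⁻¹ * g = 1 := nonsing_inv_mul g (hg.1 ▸ isUnit_one)
  have hyx : y * yᵀ = g⁻¹ * (x * xᵀ) * (g⁻¹)ᵀ := by
    calc y * yᵀ = (g⁻¹ * g) * (y * yᵀ) * (g⁻¹ * g)ᵀ := by simp [hinv]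
      _ = g⁻¹ * (x * xᵀ) * (g⁻¹)ᵀ := by rw [hxy]; simp only [transpose_mul, Matrix.mul_assoc]
  exact (realOrthogonalDoubleCoset_subset_of_congruent hx hy hg hxy).antisymm
    (realOrthogonalDoubleCoset_subset_of_congruent hy hx (inv_mem_SL2R hg) hyx)

end DoubleCoset

theorem mul_diag_mul_transpose {R : Type*} [CommRing R] (p q u v : R) :
    !![p, -p; q, q] * !![u, 0; 0, v] * !![p, -p; q, q]ᵀ =
      !![p ^ 2 * (u + v), p * q * (u - v); p * q * (u - v), q ^ 2 * (u + v)] := by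
  ext i j
  fin_cases i <;> fin_cases j <;> simp [Matrix.mul_apply] <;> ring

theorem exists_mem_SL2R_mul_diag_mul_transpose {c : ℝ} (hc : 0 < c) (u v : ℂ) :
    ∃ g ∈ SL2R, g * !![u, 0; 0, v] * gᵀ =
      !![c * ((u + v) / 2), (u - v) / 2; (u - v) / 2, (u + v) / 2 / c] := by
  obtain ⟨p, q, hpq, hpc, hqc⟩ :
      ∃ p q : ℝ, p * q = 1 / 2 ∧ p ^ 2 = c / 2 ∧ q ^ 2 = 1 / (2 * c) := by
    refine ⟨√(c / 2), √(1 / (2 * c)), ?_, Real.sq_sqrt (by positivity),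
      Real.sq_sqrt (by positivity)⟩
    rw [← Real.sqrt_mul (by positivity), Real.sqrt_eq_iff_mul_self_eq_of_pos (by norm_num)]
    field_simp
  have hpq' : (p : ℂ) * q = 1 / 2 := by simpa using congrArg Complex.ofReal hpq
  have hpc' : (p : ℂ) ^ 2 = c / 2 := by exact_mod_cast congrArg Complex.ofReal hpc
  have hqc' : (q : ℂ) ^ 2 = 1 / (2 * c) := by exact_mod_cast congrArg Complex.ofReal hqc
  refine ⟨!![(p : ℂ), -p; q, q], ⟨?_, ?_⟩, ?_⟩
  · rw [det_fin_two_of]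
    linear_combination 2 * hpq'
  · intro i j
    fin_cases i <;> fin_cases j <;> simp
  · rw [mul_diag_mul_transpose, hpq', hpc', hqc']
    congr! 3 <;> ring_nf

/-- The upper unitriangular matrix with off-diagonal entry `s`; the theorem's `n` is
`shear (i sin 2t)`. -/
def shear {R : Type*} [Zero R] [One R] (s : R) : Matrix (Fin 2) (Fin 2) R :=
  !![1, s; 0, 1]

theorem det_shear {R : Type*} [CommRing R] (s : R) : (shear s).det = 1 := by
  simp [shear]

theorem shear_mul_transpose {R : Type*} [NonAssocSemiring R] (s : R) :
    shear s * (shear s)ᵀ = !![1 + s * s, s; s, 1] := by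
  ext i j
  fin_cases i <;> fin_cases j <;> simp [shear, Matrix.mul_apply]

/-- The element of the diagonal torus of `SL(2,ℂ)` with exponential coordinate `z`; the
theorem's `a` is `diagExp (i t)`. -/
noncomputable def diagExp (z : ℂ) : Matrix (Fin 2) (Fin 2) ℂ :=
  !![Complex.exp z, 0; 0, Complex.exp (-z)]

theorem det_diagExp (z : ℂ) : (diagExp z).det = 1 := by
  simp [diagExp, ← Complex.exp_add]

theorem diagExp_mul_transpose (z : ℂ) : diagExp z * (diagExp z)ᵀ = diagExp (2 * z) := by
  ext i j
  fin_cases i <;> fin_cases j <;> simp [diagExp, Matrix.mul_apply, ← Complex.exp_add, two_mul]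

theorem exists_mem_SL2R_shear_mul_transpose_eq {θ : ℝ} (hcos : 0 < Real.cos θ) :
    ∃ g ∈ SL2R, shear (Complex.I * (Real.sin θ : ℂ)) * (shear (Complex.I * (Real.sin θ : ℂ)))ᵀ =
      g * diagExp (Complex.I * θ) * gᵀ := by
  obtain ⟨g, hg, hcongr⟩ := exists_mem_SL2R_mul_diag_mul_transpose hcos
    (Complex.exp (Complex.I * θ)) (Complex.exp (-(Complex.I * θ)))
  have hsum : (Complex.exp (Complex.I * θ) + Complex.exp (-(Complex.I * θ))) / 2 =
      Real.cos θ := by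
    rw [Complex.ofReal_cos, Complex.cos, neg_mul, mul_comm Complex.I]
  have hdiff : (Complex.exp (Complex.I * θ) - Complex.exp (-(Complex.I * θ))) / 2 =
      Complex.I * Real.sin θ := by
    rw [Complex.ofReal_sin, Complex.sin, neg_mul, mul_comm Complex.I]
    linear_combination (Complex.exp (θ * Complex.I) - Complex.exp (-(θ * Complex.I))) / 2 *
      Complex.I_sq
  have hcos_sq : 1 + Complex.I * Real.sin θ * (Complex.I * Real.sin θ) =
      (Real.cos θ : ℂ) * Real.cos θ := by
    have hpyth : (Real.sin θ : ℂ) ^ 2 + (Real.cos θ : ℂ) ^ 2 = 1 := by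
      exact_mod_cast Real.sin_sq_add_cos_sq θ
    linear_combination (Real.sin θ : ℂ) ^ 2 * Complex.I_sq - hpyth
  have hcos_ne : (Real.cos θ : ℂ) ≠ 0 := by exact_mod_cast hcos.ne'
  refine ⟨g, hg, ?_⟩
  rw [shear_mul_transpose, diagExp, hcongr, hsum, hdiff, hcos_sq, div_self hcos_ne]

theorem stmt_3_general {t : ℝ} (hcos : 0 < Real.cos (2 * t)) :
    realOrthogonalDoubleCoset (shear (Complex.I * (Real.sin (2 * t) : ℂ))) =
      realOrthogonalDoubleCoset (diagExp (Complex.I * t)) := by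
  obtain ⟨g, hg, hcongr⟩ := exists_mem_SL2R_shear_mul_transpose_eq hcos
  have hdouble : Complex.I * ((2 * t : ℝ) : ℂ) = 2 * (Complex.I * t) := by push_cast; ring
  rw [hdouble, ← diagExp_mul_transpose] at hcongr
  exact realOrthogonalDoubleCoset_eq_of_congruent (det_shear _) (det_diagExp _) hg hcongr

/-- for `|t| < π/4`,
`SL(2,ℝ)·n·SO(2,ℂ) = SL(2,ℝ)·a·SO(2,ℂ)` where `n = [[1, i sin 2t],[0,1]]` and
`a = diag(e^{it}, e^{-it})`. -/
theorem stmt_3 (t : ℝ) (ht : |t| < Real.pi / 4) :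
    {m : Matrix (Fin 2) (Fin 2) ℂ | ∃ g ∈ SL2R, ∃ k ∈ SO2C,
        m = g * !![1, Complex.I * (Real.sin (2 * t) : ℂ); 0, 1] * k} =
    {m : Matrix (Fin 2) (Fin 2) ℂ | ∃ g ∈ SL2R, ∃ k ∈ SO2C,
        m = g * !![Complex.exp (Complex.I * (t : ℂ)), 0;
                   0, Complex.exp (-(Complex.I * (t : ℂ)))] * k} :=
  stmt_3_general <| Real.cos_pos_of_mem_Ioo
    ⟨by linarith [(abs_lt.mp ht).1], by linarith [(abs_lt.mp ht).2]⟩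
end

section
/- One has the equality of subsets of SL(2,ℂ): ⋃_{θ ∈ (−π/4, π/4)} SL(2,ℝ)·diag(e^{iθ}, e^{−iθ})·SO(2,ℂ) = ⋃_{x ∈ (−1, 1)} SL(2,ℝ)·u_x·SO(2,ℂ), where u_x is the matrix with rows (1, i·x) and (0, 1). (The left-hand side is the preimage in SL(2,ℂ) of the crown domain Ξ of SL(2,ℝ)/SO(2); thus Ξ = G·exp(iΛ)·x₀ with Λ the set of strictly upper triangular real matrices with entry x, |x| < 1.) -/
open Matrix

/-!
Right multiplication by `SO(2,ℂ)` does not change `m mᵀ`, and a matrix of determinant one is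
determined by `m mᵀ` up to that action. Hence `a_θ = diag(e^{iθ}, e^{-iθ})` lies in
`SL(2,ℝ) u_x SO(2,ℂ)` as soon as `a_θ a_θᵀ = diag(e^{2iθ}, e^{-2iθ})` is congruent to
`u_x u_xᵀ = [[1 - x², ix], [ix, 1]]` under `SL(2,ℝ)`. For `x = sin 2θ` with `cos 2θ > 0`, rescaling
the coordinates turns the latter into `[[cos 2θ, i sin 2θ], [i sin 2θ, cos 2θ]]`, which a rotation
by `-π/4` diagonalises. Finally `θ ↦ sin 2θ` maps `(-π/4, π/4)` onto `(-1, 1)`.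
-/

open DoubleCoset
open scoped Pointwise

section DoubleCosets

variable {G H M : Type*} [Group G] [Group H] [Monoid M]

theorem doubleCoset_range_eq_of_mem (φ : G →* M) (ψ : H →* M) {a b : M}
    (hb : b ∈ doubleCoset a (Set.range φ) (Set.range ψ)) :
    doubleCoset b (Set.range φ) (Set.range ψ) = doubleCoset a (Set.range φ) (Set.range ψ) := by
  obtain ⟨_, ⟨g, rfl⟩, _, ⟨h, rfl⟩, rfl⟩ := mem_doubleCoset.1 hb
  have range_mul_map : Set.range φ * {φ g} = Set.range φ := by
    rw [Set.mul_singleton, ← Set.range_comp, ← (Equiv.mulRight g).surjective.range_comp φ]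
    exact congrArg Set.range (funext fun x => (map_mul φ x g).symm)
  have map_mul_range : {ψ h} * Set.range ψ = Set.range ψ := by
    rw [Set.singleton_mul, ← Set.range_comp, ← (Equiv.mulLeft h).surjective.range_comp ψ]
    exact congrArg Set.range (funext fun y => (map_mul ψ h y).symm)
  calc Set.range φ * {φ g * a * ψ h} * Set.range ψ
      = Set.range φ * {φ g} * {a} * ({ψ h} * Set.range ψ) := by
        simp only [← Set.singleton_mul_singleton, mul_assoc]
    _ = Set.range φ * {a} * Set.range ψ := by rw [range_mul_map, map_mul_range]

end DoubleCosets

section Orthogonal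

variable {n R : Type*} [Fintype n] [DecidableEq n] [CommRing R]

theorem exists_mem_specialOrthogonalGroup_eq_mul {A B : Matrix n n R} (hB : IsUnit B.det)
    (hdet : A.det = B.det) (h : A * Aᵀ = B * Bᵀ) :
    ∃ k ∈ specialOrthogonalGroup n R, A = B * k := by
  refine ⟨B⁻¹ * A, mem_specialOrthogonalGroup_iff.2 ⟨(mem_orthogonalGroup_iff n R).2 ?_, ?_⟩, ?_⟩
  · calc B⁻¹ * A * (B⁻¹ * A)ᵀ = B⁻¹ * (A * Aᵀ) * B⁻¹ᵀ := by
          simp only [transpose_mul, Matrix.mul_assoc]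
      _ = (B⁻¹ * B) * (B⁻¹ * B)ᵀ := by
          simp only [h, transpose_mul, Matrix.mul_assoc]
      _ = 1 := by rw [nonsing_inv_mul B hB, transpose_one, mul_one]
  · rw [det_mul, hdet, ← det_mul, nonsing_inv_mul B hB, det_one]
  · rw [mul_nonsing_inv_cancel_left B A hB]

end Orthogonal

section FinTwo

variable {R : Type*} [CommRing R]

theorem of_mul_transpose_fin_two (a b c d : R) :
    !![a, b; c, d] * !![a, b; c, d]ᵀ =
      !![a ^ 2 + b ^ 2, a * c + b * d; a * c + b * d, c ^ 2 + d ^ 2] := by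
  ext k l
  fin_cases k <;> fin_cases l <;> simp [mul_apply] <;> ring

theorem mul_unitriangular_mul_transpose {i c s p q : R} (hi : i ^ 2 = -1)
    (hcs : s ^ 2 + c ^ 2 = 1) (hpq : 2 * p * q = 1) (hq : 2 * q ^ 2 = c) :
    !![p, q; -p, q] * !![1, i * s; 0, 1] * (!![p, q; -p, q] * !![1, i * s; 0, 1])ᵀ =
      !![c + i * s, 0; 0, c - i * s] := by
  have hprod : !![p, q; -p, q] * !![1, i * s; 0, 1] =
      !![p, q + p * (i * s); -p, q - p * (i * s)] := by
    rw [mul_fin_two]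
    ring_nf
  have hpsq : p ^ 2 * (1 + (i * s) ^ 2) = q ^ 2 :=
    calc p ^ 2 * (1 + (i * s) ^ 2) = p ^ 2 * c ^ 2 := by
          linear_combination p ^ 2 * s ^ 2 * hi - p ^ 2 * hcs
      _ = (2 * p * q) ^ 2 * q ^ 2 := by rw [← hq]; ring
      _ = q ^ 2 := by rw [hpq, one_pow, one_mul]
  have entry_zero_zero : p ^ 2 + (q + p * (i * s)) ^ 2 = c + i * s := by
    linear_combination hpsq + i * s * hpq + hq
  have entry_zero_one : p * -p + (q + p * (i * s)) * (q - p * (i * s)) = 0 := by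
    linear_combination -hpsq
  have entry_one_one : (-p) ^ 2 + (q - p * (i * s)) ^ 2 = c - i * s := by
    linear_combination hpsq - i * s * hpq + hq
  rw [hprod, of_mul_transpose_fin_two, entry_zero_zero, entry_zero_one, entry_one_one]

end FinTwo

theorem exp_I_mul_sq (z : ℂ) :
    Complex.exp (Complex.I * z) ^ 2 = Complex.cos (2 * z) + Complex.I * Complex.sin (2 * z) :=
  calc Complex.exp (Complex.I * z) ^ 2 = Complex.exp (2 * z * Complex.I) := by
        rw [← Complex.exp_nat_mul]
        push_cast
        ring_nf
    _ = Complex.cos (2 * z) + Complex.I * Complex.sin (2 * z) := by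
        rw [Complex.exp_mul_I, mul_comm Complex.I]

theorem image_two_mul_Ioo_pi_div_four :
    (2 * ·) '' Set.Ioo (-(Real.pi / 4)) (Real.pi / 4) = Set.Ioo (-(Real.pi / 2)) (Real.pi / 2) := by
  rw [Set.image_mul_left_Ioo two_pos]
  congr 1 <;> ring

theorem image_sin_two_mul_Ioo :
    (fun θ => Real.sin (2 * θ)) '' Set.Ioo (-(Real.pi / 4)) (Real.pi / 4) = Set.Ioo (-1) 1 := by
  rw [← Set.image_image Real.sin (2 * ·), image_two_mul_Ioo_pi_div_four]
  exact Real.sinPartialHomeomorph.image_source_eq_target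

theorem SO2C_eq_specialOrthogonalGroup :
    SO2C = (specialOrthogonalGroup (Fin 2) ℂ : Set (Matrix (Fin 2) (Fin 2) ℂ)) := by
  ext k
  rw [SetLike.mem_coe, mem_specialOrthogonalGroup_iff, mem_orthogonalGroup_iff', and_comm]
  rfl

theorem SL2R_eq_range : SL2R = Set.range
    (SpecialLinearGroup.coeMonoidHom.comp
      (SpecialLinearGroup.map (n := Fin 2) Complex.ofRealHom)) := by
  ext m
  constructor
  · rintro ⟨hdet, him⟩
    have map_re : (m.map Complex.re).map Complex.ofRealHom = m := by
      ext i j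
      exact Complex.ext rfl (him i j).symm
    have det_re : (m.map Complex.re).det = 1 := Complex.ofReal_injective <| by
      rw [← Complex.ofRealHom_eq_coe, RingHom.map_det, RingHom.mapMatrix_apply, map_re, hdet,
        Complex.ofReal_one]
    exact ⟨⟨m.map Complex.re, det_re⟩, map_re⟩
  · rintro ⟨g, rfl⟩
    exact ⟨(SpecialLinearGroup.map Complex.ofRealHom g).det_coe,
      fun i j => Complex.ofReal_im (g i j)⟩

theorem doubleCoset_SL2R_SO2C_eq_of_mem {A B : Matrix (Fin 2) (Fin 2) ℂ}
    (hA : A ∈ doubleCoset B SL2R SO2C) :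
    doubleCoset A SL2R SO2C = doubleCoset B SL2R SO2C := by
  have SO2C_eq_range : SO2C = Set.range (specialOrthogonalGroup (Fin 2) ℂ).subtype := by
    rw [Submonoid.coe_subtype, Subtype.range_coe]
    exact SO2C_eq_specialOrthogonalGroup
  rw [SL2R_eq_range, SO2C_eq_range] at hA ⊢
  exact doubleCoset_range_eq_of_mem _ _ hA

theorem mem_doubleCoset_of_mul_transpose_eq {A B g : Matrix (Fin 2) (Fin 2) ℂ}
    (hA : A.det = 1) (hB : B.det = 1) (hg : g ∈ SL2R) (h : A * Aᵀ = g * B * (g * B)ᵀ) :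
    A ∈ doubleCoset B SL2R SO2C := by
  have hgB : (g * B).det = 1 := by rw [det_mul, hg.1, hB, mul_one]
  obtain ⟨k, hk, rfl⟩ := exists_mem_specialOrthogonalGroup_eq_mul
    (hgB ▸ isUnit_one) (hA.trans hgB.symm) h
  exact mem_doubleCoset.2 ⟨g, hg, k, SO2C_eq_specialOrthogonalGroup ▸ hk, rfl⟩

/-- The element `a_θ = exp(iθ diag(1, -1))` of the complexified diagonal torus of
`SL(2,ℝ)`; these represent the double cosets on the left-hand side. -/
noncomputable def imagTorus (θ : ℝ) : Matrix (Fin 2) (Fin 2) ℂ :=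
  !![Complex.exp (Complex.I * (θ : ℂ)), 0; 0, Complex.exp (-(Complex.I * (θ : ℂ)))]

/-- The upper unitriangular element `u_x = exp(i x E₁₂)` of `SL(2,ℂ)`; these represent the
double cosets on the right-hand side. -/
def imagUnipotent (x : ℝ) : Matrix (Fin 2) (Fin 2) ℂ :=
  !![1, Complex.I * (x : ℂ); 0, 1]

theorem det_imagTorus (θ : ℝ) : (imagTorus θ).det = 1 := by
  rw [imagTorus, det_fin_two_of, ← Complex.exp_add, add_neg_cancel, Complex.exp_zero, mul_zero,
    sub_zero]

theorem det_imagUnipotent (x : ℝ) : (imagUnipotent x).det = 1 := by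
  rw [imagUnipotent, det_fin_two_of, mul_one, mul_zero, sub_zero]

theorem imagTorus_mul_transpose (θ : ℝ) :
    imagTorus θ * (imagTorus θ)ᵀ =
      !![Real.cos (2 * θ) + Complex.I * Real.sin (2 * θ), 0;
        0, Real.cos (2 * θ) - Complex.I * Real.sin (2 * θ)] := by
  have exp_neg_sq : Complex.exp (-(Complex.I * θ)) ^ 2 =
      Complex.cos (2 * θ) - Complex.I * Complex.sin (2 * θ) := by
    simpa [← sub_eq_add_neg] using exp_I_mul_sq (-θ)
  rw [imagTorus, of_mul_transpose_fin_two, exp_I_mul_sq, exp_neg_sq]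
  simp

theorem exists_mem_SL2R_mul_imagUnipotent {c s : ℝ} (hc : 0 < c) (hcs : s ^ 2 + c ^ 2 = 1) :
    ∃ g ∈ SL2R, g * imagUnipotent s * (g * imagUnipotent s)ᵀ =
      !![c + Complex.I * s, 0; 0, c - Complex.I * s] := by
  obtain ⟨q, hq_pos, hq⟩ : ∃ q : ℝ, 0 < q ∧ 2 * q ^ 2 = c :=
    ⟨√(c / 2), by positivity, by rw [Real.sq_sqrt (by positivity)]; ring⟩
  obtain ⟨p, hpq⟩ : ∃ p : ℝ, 2 * p * q = 1 := ⟨1 / (2 * q), by field_simp⟩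
  -- This `g` is the rotation by `-π/4` times `diag(c^{-1/2}, c^{1/2})`.
  refine ⟨!![(p : ℂ), q; -p, q], ⟨?_, fun k l => ?_⟩, ?_⟩
  · rw [det_fin_two_of]
    have hpq' : 2 * (p : ℂ) * q = 1 := mod_cast hpq
    linear_combination hpq'
  · fin_cases k <;> fin_cases l <;> simp
  · exact mul_unitriangular_mul_transpose Complex.I_sq (mod_cast hcs) (mod_cast hpq)
      (mod_cast hq)

theorem doubleCoset_imagTorus {θ : ℝ} (hcos : 0 < Real.cos (2 * θ)) :
    doubleCoset (imagTorus θ) SL2R SO2C =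
      doubleCoset (imagUnipotent (Real.sin (2 * θ))) SL2R SO2C := by
  obtain ⟨g, hg, hgu⟩ := exists_mem_SL2R_mul_imagUnipotent hcos (Real.sin_sq_add_cos_sq (2 * θ))
  exact doubleCoset_SL2R_SO2C_eq_of_mem <|
    mem_doubleCoset_of_mul_transpose_eq (det_imagTorus θ) (det_imagUnipotent _) hg
      ((imagTorus_mul_transpose θ).trans hgu.symm)

/-- the preimage in `SL(2,ℂ)` of the crown domain of
`SL(2,ℝ)/SO(2)`, i.e. `⋃_{|θ|<π/4} SL(2,ℝ)·diag(e^{iθ},e^{-iθ})·SO(2,ℂ)`,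
equals `⋃_{|x|<1} SL(2,ℝ)·u_x·SO(2,ℂ)` with `u_x = [[1, ix],[0,1]]`. -/
theorem stmt_4 :
    {m : Matrix (Fin 2) (Fin 2) ℂ | ∃ θ : ℝ, θ ∈ Set.Ioo (-(Real.pi / 4)) (Real.pi / 4) ∧
        ∃ g ∈ SL2R, ∃ k ∈ SO2C,
          m = g * !![Complex.exp (Complex.I * (θ : ℂ)), 0;
                     0, Complex.exp (-(Complex.I * (θ : ℂ)))] * k} =
    {m : Matrix (Fin 2) (Fin 2) ℂ | ∃ x : ℝ, x ∈ Set.Ioo (-1 : ℝ) 1 ∧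
        ∃ g ∈ SL2R, ∃ k ∈ SO2C,
          m = g * !![1, Complex.I * (x : ℂ); 0, 1] * k} := by
  have iUnion_doubleCoset_eq :
      ⋃ θ ∈ Set.Ioo (-(Real.pi / 4)) (Real.pi / 4), doubleCoset (imagTorus θ) SL2R SO2C =
        ⋃ x ∈ Set.Ioo (-1 : ℝ) 1, doubleCoset (imagUnipotent x) SL2R SO2C := by
    rw [← image_sin_two_mul_Ioo, Set.biUnion_image]
    refine Set.iUnion₂_congr fun θ hθ => doubleCoset_imagTorus (Real.cos_pos_of_mem_Ioo ?_)
    exact image_two_mul_Ioo_pi_div_four ▸ Set.mem_image_of_mem (2 * ·) hθ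
  ext m
  simpa only [Set.mem_iUnion, mem_doubleCoset, exists_prop, Set.mem_ofPred_eq, imagTorus,
    imagUnipotent] using Set.ext_iff.1 iUnion_doubleCoset_eq m
end

section
/- The map b : G × 𝒞 → ℂ³, b(g, Y) = g·(Y + (0,0,i)), has image exactly ∂Ξ, and it separates H-orbits: for g, g′ ∈ G and Y, Y′ ∈ 𝒞 one has b(g, Y) = b(g′, Y′) if and only if the element h := g′⁻¹·g satisfies h·z₁ = z₁ (i.e. h ∈ H) and h·Y = Y′. (Hence b induces a G-equivariant bijection from G ×_H 𝒞 onto the full boundary ∂Ξ of the crown of SO_e(1,2)/SO(2).) -/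
open Matrix

/-- The Lorentz form `diag(1,-1,-1)`. -/
noncomputable def eta3 : Matrix (Fin 3) (Fin 3) ℝ := Matrix.diagonal ![1, -1, -1]

/-- `G = SO_e(1,2)`: real `3×3` matrices preserving `diag(1,-1,-1)`, of determinant `1`,
with positive upper-left entry. -/
noncomputable def Gso : Set (Matrix (Fin 3) (Fin 3) ℝ) :=
  {g | gᵀ * eta3 * g = eta3 ∧ g.det = 1 ∧ 0 < g 0 0}

/-- Action of a real matrix on `ℂ³` by matrix multiplication. -/
noncomputable def act (g : Matrix (Fin 3) (Fin 3) ℝ) (z : Fin 3 → ℂ) : Fin 3 → ℂ :=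
  (g.map (fun x : ℝ => (x : ℂ))).mulVec z

/-- `Q(z) = z₀² - z₁² - z₂²` on `ℂ³`. -/
def Qc (z : Fin 3 → ℂ) : ℂ := z 0 ^ 2 - z 1 ^ 2 - z 2 ^ 2

/-- `Q(y) = y₀² - y₁² - y₂²` on `ℝ³`. -/
def Qr (y : Fin 3 → ℝ) : ℝ := y 0 ^ 2 - y 1 ^ 2 - y 2 ^ 2

/-- The semisimple boundary part `∂ₛΞ = {iy : y ∈ ℝ³, Q(y) = -1}`. -/
def bdS : Set (Fin 3 → ℂ) :=
  {z | ∃ y : Fin 3 → ℝ, (∀ j, z j = Complex.I * (y j : ℂ)) ∧ Qr y = -1}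

/-- The nilpotent boundary part
`∂ₙΞ = {x + iy : Q(x+iy) = 1, x₀ > 0, Q(x) = 0}`. -/
def bdN : Set (Fin 3 → ℂ) :=
  {z | Qc z = 1 ∧ 0 < (z 0).re ∧ Qr (fun j => (z j).re) = 0}

/-- The point `z₁ = (0,0,i)`. -/
noncomputable def z1pt : Fin 3 → ℂ := ![0, 0, Complex.I]

/-- The cone `𝒞 = ℝ₊·(1,1,0) ∪ ℝ₊·(1,-1,0)`. -/
def cone3 : Set (Fin 3 → ℝ) :=
  {Y | ∃ s : ℝ, 0 ≤ s ∧ (Y = ![s, s, 0] ∨ Y = ![s, -s, 0])}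

/-- The map `b(g,Y) = g·(Y + (0,0,i))`. -/
noncomputable def bmap (g : Matrix (Fin 3) (Fin 3) ℝ) (Y : Fin 3 → ℝ) : Fin 3 → ℂ :=
  act g (fun j => (Y j : ℂ) + z1pt j)

/-!
Write `z = x + iy` and `e₂ = (0,0,1)`. The map `b` sends `(g, Y)` to the point with real part `g Y`
and imaginary part `g e₂`, and a point is in `∂Ξ` iff `x` is null with `x₀ ≥ 0`, `Q(y) = -1` and
`x ⊥ y`. These conditions are `G`-invariant, and for `y = e₂` they say exactly `x ∈ 𝒞`. Since `G` is
transitive on `{Q = -1}`, every boundary point can be moved to one with `y = e₂`, so `b` is onto.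
-/

section ComplexAction

open Complex

variable {g g' : Matrix (Fin 3) (Fin 3) ℝ} {z w : Fin 3 → ℂ}

theorem act_one (z : Fin 3 → ℂ) : act 1 z = z := by
  simp [act]

theorem act_mul (g h : Matrix (Fin 3) (Fin 3) ℝ) (z : Fin 3 → ℂ) :
    act (g * h) z = act g (act h z) := by
  simp only [act, mulVec_mulVec]
  exact congrArg (· *ᵥ z) (Matrix.map_mul (f := ofRealHom))

theorem act_eq_act_iff (hg' : IsUnit g'.det) : act g z = act g' w ↔ act (g'⁻¹ * g) z = w := by
  rw [act_mul]
  constructor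
  · intro h
    rw [h, ← act_mul, nonsing_inv_mul _ hg', act_one]
  · rintro rfl
    rw [← act_mul, mul_nonsing_inv _ hg', act_one]

theorem re_comp_act (g : Matrix (Fin 3) (Fin 3) ℝ) (z : Fin 3 → ℂ) :
    re ∘ act g z = g *ᵥ (re ∘ z) := by
  ext j
  simp [act, mulVec, dotProduct]

theorem im_comp_act (g : Matrix (Fin 3) (Fin 3) ℝ) (z : Fin 3 → ℂ) :
    im ∘ act g z = g *ᵥ (im ∘ z) := by
  ext j
  simp [act, mulVec, dotProduct]

theorem act_eq_iff :
    act g z = w ↔ g *ᵥ (re ∘ z) = re ∘ w ∧ g *ᵥ (im ∘ z) = im ∘ w := by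
  rw [← re_comp_act, ← im_comp_act]
  simp only [funext_iff, Complex.ext_iff, Function.comp_apply, forall_and]

theorem im_comp_z1pt : im ∘ z1pt = Pi.single 2 1 := by
  ext j
  fin_cases j <;> simp [z1pt]

theorem re_comp_z1pt : re ∘ z1pt = 0 := by
  ext j
  fin_cases j <;> simp [z1pt]

theorem re_comp_ofReal_add_z1pt (Y : Fin 3 → ℝ) : re ∘ (fun j => (Y j : ℂ) + z1pt j) = Y := by
  ext j
  simpa using congrFun re_comp_z1pt j

theorem im_comp_ofReal_add_z1pt (Y : Fin 3 → ℝ) :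
    im ∘ (fun j => (Y j : ℂ) + z1pt j) = Pi.single 2 1 := by
  ext j
  simpa using congrFun im_comp_z1pt j

theorem act_z1pt_eq_z1pt_iff : act g z1pt = z1pt ↔ g *ᵥ Pi.single 2 1 = Pi.single 2 1 := by
  simp [act_eq_iff, re_comp_z1pt, im_comp_z1pt]

theorem bmap_eq_iff {Y : Fin 3 → ℝ} :
    bmap g Y = z ↔ g *ᵥ Y = re ∘ z ∧ g *ᵥ Pi.single 2 1 = im ∘ z := by
  rw [bmap, act_eq_iff, re_comp_ofReal_add_z1pt, im_comp_ofReal_add_z1pt]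

theorem bmap_eq_bmap_iff (hg' : IsUnit g'.det) {Y Y' : Fin 3 → ℝ} :
    bmap g Y = bmap g' Y' ↔ act (g'⁻¹ * g) z1pt = z1pt ∧ (g'⁻¹ * g) *ᵥ Y = Y' := by
  rw [bmap, bmap, act_eq_act_iff hg', act_eq_iff, act_z1pt_eq_z1pt_iff, and_comm]
  simp only [re_comp_ofReal_add_z1pt, im_comp_ofReal_add_z1pt]

end ComplexAction

section LorentzForm

/-- The symmetric bilinear form on `ℝ³` polarizing `Qr`, written through the Gram matrix `eta3` so
that its invariance under `Gso` is matrix algebra. -/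
noncomputable def lorentzForm (x y : Fin 3 → ℝ) : ℝ := x ⬝ᵥ eta3 *ᵥ y

variable {g : Matrix (Fin 3) (Fin 3) ℝ} {x y : Fin 3 → ℝ}

theorem lorentzForm_apply (x y : Fin 3 → ℝ) :
    lorentzForm x y = x 0 * y 0 - x 1 * y 1 - x 2 * y 2 := by
  simp only [lorentzForm, eta3, dotProduct, mulVec_diagonal, Fin.sum_univ_three, cons_val]
  ring

theorem lorentzForm_self (x : Fin 3 → ℝ) : lorentzForm x x = Qr x := by
  rw [lorentzForm_apply, Qr]
  ring

theorem lorentzForm_comm (x y : Fin 3 → ℝ) : lorentzForm x y = lorentzForm y x := by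
  simp only [lorentzForm_apply, mul_comm]

theorem lorentzForm_single_zero (x : Fin 3 → ℝ) : lorentzForm (Pi.single 0 1) x = x 0 := by
  simp [lorentzForm_apply]

theorem Qr_single_zero : Qr (Pi.single 0 1) = 1 := by
  simp [Qr]

theorem Qr_single_two : Qr (Pi.single 2 1) = -1 := by
  simp [Qr]

theorem eq_zero_of_Qr_eq_zero (hx : Qr x = 0) (hx₀ : x 0 = 0) : x = 0 := by
  rw [Qr, hx₀] at hx
  ext j
  fin_cases j
  · exact hx₀
  · exact sq_eq_zero_iff.mp (show x 1 ^ 2 = 0 by linarith [sq_nonneg (x 1), sq_nonneg (x 2)])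
  · exact sq_eq_zero_iff.mp (show x 2 ^ 2 = 0 by linarith [sq_nonneg (x 1), sq_nonneg (x 2)])

theorem Qc_eq_mk (z : Fin 3 → ℂ) :
    Qc z = ⟨Qr (Complex.re ∘ z) - Qr (Complex.im ∘ z),
      2 * lorentzForm (Complex.re ∘ z) (Complex.im ∘ z)⟩ := by
  apply Complex.ext
  · simp only [Qc, Qr, pow_two, Complex.sub_re, Complex.mul_re, Function.comp_apply]
    ring
  · simp only [Qc, lorentzForm_apply, pow_two, Complex.sub_im, Complex.mul_im, Function.comp_apply]
    ring

theorem lorentzForm_nonneg (hx₀ : 0 ≤ x 0) (hx : 0 ≤ Qr x) (hy₀ : 0 ≤ y 0) (hy : 0 ≤ Qr y) :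
    0 ≤ lorentzForm x y := by
  rw [Qr] at hx hy
  have cauchy_schwarz :
      (x 1 * y 1 + x 2 * y 2) ^ 2 ≤ (x 1 ^ 2 + x 2 ^ 2) * (y 1 ^ 2 + y 2 ^ 2) := by
    linarith [sq_nonneg (x 1 * y 2 - x 2 * y 1)]
  have spatial_le : x 1 * y 1 + x 2 * y 2 ≤ x 0 * y 0 := by
    refine le_of_sq_le_sq ?_ (mul_nonneg hx₀ hy₀)
    calc (x 1 * y 1 + x 2 * y 2) ^ 2
        ≤ (x 1 ^ 2 + x 2 ^ 2) * (y 1 ^ 2 + y 2 ^ 2) := cauchy_schwarz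
      _ ≤ x 0 ^ 2 * y 0 ^ 2 := by gcongr <;> linarith
      _ = (x 0 * y 0) ^ 2 := by ring
  rw [lorentzForm_apply]
  linarith

theorem lorentzForm_mulVec_mulVec (hg : gᵀ * eta3 * g = eta3) (x y : Fin 3 → ℝ) :
    lorentzForm (g *ᵥ x) (g *ᵥ y) = lorentzForm x y := by
  calc g *ᵥ x ⬝ᵥ eta3 *ᵥ g *ᵥ y = x ⬝ᵥ (gᵀ * eta3 * g) *ᵥ y := by
        rw [← vecMul_transpose, ← dotProduct_mulVec, mulVec_mulVec, mulVec_mulVec, Matrix.mul_assoc]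
    _ = x ⬝ᵥ eta3 *ᵥ y := by rw [hg]

theorem Qr_mulVec (hg : gᵀ * eta3 * g = eta3) (x : Fin 3 → ℝ) : Qr (g *ᵥ x) = Qr x := by
  simp only [← lorentzForm_self, lorentzForm_mulVec_mulVec hg]

theorem transpose_mul_eta3_mul_apply (g : Matrix (Fin 3) (Fin 3) ℝ) (i j : Fin 3) :
    (gᵀ * eta3 * g) i j = lorentzForm (g.col i) (g.col j) := by
  rw [Matrix.mul_assoc]
  rfl

theorem transpose_mul_eta3_mul_eq_of_orthonormal_cols
    (h₀ : Qr (g.col 0) = 1) (h₁ : Qr (g.col 1) = -1) (h₂ : Qr (g.col 2) = -1)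
    (h₀₁ : lorentzForm (g.col 0) (g.col 1) = 0) (h₀₂ : lorentzForm (g.col 0) (g.col 2) = 0)
    (h₁₂ : lorentzForm (g.col 1) (g.col 2) = 0) : gᵀ * eta3 * g = eta3 := by
  ext i j
  rw [transpose_mul_eta3_mul_apply]
  fin_cases i <;> fin_cases j <;>
    simp [eta3, lorentzForm_self, lorentzForm_comm (g.col 1) (g.col 0),
      lorentzForm_comm (g.col 2), h₀, h₁, h₂, h₀₁, h₀₂, h₁₂]

theorem eta3_mul_eta3 : eta3 * eta3 = 1 := by
  rw [eta3, diagonal_mul_diagonal, ← diagonal_one]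
  congr 1
  ext i
  fin_cases i <;> simp

theorem inv_eq_eta3_mul_transpose_mul_eta3 (hg : gᵀ * eta3 * g = eta3) :
    g⁻¹ = eta3 * gᵀ * eta3 := by
  refine inv_eq_left_inv ?_
  rw [Matrix.mul_assoc, Matrix.mul_assoc, ← Matrix.mul_assoc gᵀ, hg, eta3_mul_eta3]

end LorentzForm

namespace Gso

variable {g : Matrix (Fin 3) (Fin 3) ℝ} {x y : Fin 3 → ℝ}

theorem isUnit_det (hg : g ∈ Gso) : IsUnit g.det := by
  simp [hg.2.1]

theorem inv_mem (hg : g ∈ Gso) : g⁻¹ ∈ Gso := by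
  refine ⟨?_, ?_, ?_⟩
  · calc (g⁻¹)ᵀ * eta3 * g⁻¹ = (g⁻¹)ᵀ * (gᵀ * eta3 * g) * g⁻¹ := by rw [hg.1]
      _ = (g * g⁻¹)ᵀ * eta3 * (g * g⁻¹) := by simp only [transpose_mul, Matrix.mul_assoc]
      _ = eta3 := by simp [mul_nonsing_inv _ (isUnit_det hg)]
  · simp [det_nonsing_inv, hg.2.1]
  · have inv_zero_zero : g⁻¹ 0 0 = g 0 0 := by
      simp [inv_eq_eta3_mul_transpose_mul_eta3 hg.1, eta3]
    exact inv_zero_zero ▸ hg.2.2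

theorem mulVec_apply_zero_nonneg (hg : g ∈ Gso) (hx₀ : 0 ≤ x 0) (hx : 0 ≤ Qr x) :
    0 ≤ (g *ᵥ x) 0 := by
  have time_eq : (g *ᵥ x) 0 = lorentzForm (g⁻¹ *ᵥ Pi.single 0 1) x := by
    rw [← lorentzForm_mulVec_mulVec hg.1 (g⁻¹ *ᵥ _), mulVec_mulVec,
      mul_nonsing_inv _ (isUnit_det hg), one_mulVec, lorentzForm_single_zero]
  rw [time_eq]
  refine lorentzForm_nonneg ?_ ?_ hx₀ hx
  · simpa using (inv_mem hg).2.2.le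
  · rw [Qr_mulVec (inv_mem hg).1, Qr_single_zero]
    exact zero_le_one

/- The columns of the witness are the normalized projection `e₀ + y₀ y` of `e₀` to `y^⊥`, the
horizontal vector `(0, y₂, -y₁)` normalized, and `y` itself. -/
theorem exists_mulVec_single_two_eq (hy : Qr y = -1) : ∃ g ∈ Gso, g *ᵥ Pi.single 2 1 = y := by
  obtain ⟨c, hc, hc_sq⟩ : ∃ c : ℝ, 0 < c ∧ c ^ 2 * (1 + y 0 ^ 2) = 1 := by
    have norm_sq_pos : 0 < 1 + y 0 ^ 2 := by positivity
    refine ⟨(√(1 + y 0 ^ 2))⁻¹, by positivity, ?_⟩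
    rw [inv_pow, Real.sq_sqrt norm_sq_pos.le, inv_mul_cancel₀ norm_sq_pos.ne']
  rw [Qr] at hy
  refine ⟨!![c * (1 + y 0 ^ 2), 0, y 0;
    c * (y 0 * y 1), c * y 2, y 1;
    c * (y 0 * y 2), -(c * y 1), y 2], ⟨?_, ?_, ?_⟩, ?_⟩
  · apply transpose_mul_eta3_mul_eq_of_orthonormal_cols <;>
      simp only [Qr, lorentzForm_apply, col_apply, of_apply, cons_val]
    · linear_combination c ^ 2 * y 0 ^ 2 * hy + hc_sq
    · linear_combination c ^ 2 * hy - hc_sq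
    · exact hy
    · ring
    · linear_combination c * y 0 * hy
    · ring
  · rw [det_fin_three]
    simp only [of_apply, cons_val]
    linear_combination hc_sq - c ^ 2 * hy
  · simpa using by positivity
  · ext j
    fin_cases j <;> simp

end Gso

/-- The points `x + iy` of `∂Ξ` in real coordinates: `x` lies on the closed future light cone,
`y` on the one-sheeted hyperboloid, and they are orthogonal. The semisimple part is `x = 0`. -/
structure IsBoundaryPair (x y : Fin 3 → ℝ) : Prop where
  zero_le : 0 ≤ x 0
  null : Qr x = 0
  spacelike : Qr y = -1
  orthogonal : lorentzForm x y = 0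

namespace IsBoundaryPair

variable {g : Matrix (Fin 3) (Fin 3) ℝ} {x y : Fin 3 → ℝ}

theorem mulVec (hg : g ∈ Gso) (h : IsBoundaryPair x y) : IsBoundaryPair (g *ᵥ x) (g *ᵥ y) where
  zero_le := Gso.mulVec_apply_zero_nonneg hg h.zero_le h.null.ge
  null := (Qr_mulVec hg.1 x).trans h.null
  spacelike := (Qr_mulVec hg.1 y).trans h.spacelike
  orthogonal := (lorentzForm_mulVec_mulVec hg.1 x y).trans h.orthogonal

end IsBoundaryPair

theorem isBoundaryPair_single_two_iff {Y : Fin 3 → ℝ} :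
    IsBoundaryPair Y (Pi.single 2 1) ↔ Y ∈ cone3 := by
  constructor
  · rintro ⟨hY₀, hnull, -, horth⟩
    have hY₂ : Y 2 = 0 := by simpa [lorentzForm_apply] using horth
    have hsq : Y 1 ^ 2 = Y 0 ^ 2 := by rw [Qr, hY₂] at hnull; linarith
    refine ⟨Y 0, hY₀, (sq_eq_sq_iff_eq_or_eq_neg.mp hsq).imp ?_ ?_⟩ <;>
    · intro hY₁
      ext j
      fin_cases j <;> simp [hY₁, hY₂]
  · rintro ⟨s, hs, rfl | rfl⟩ <;>
      exact ⟨by simpa, by simp [Qr], Qr_single_two, by simp [lorentzForm_apply]⟩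

theorem mem_bdS_iff {z : Fin 3 → ℂ} :
    z ∈ bdS ↔ Complex.re ∘ z = 0 ∧ Qr (Complex.im ∘ z) = -1 := by
  constructor
  · rintro ⟨y, hz, hy⟩
    obtain rfl : z = fun j => Complex.I * (y j : ℂ) := funext hz
    exact ⟨by ext; simp, by simpa [Function.comp_def] using hy⟩
  · rintro ⟨hre, him⟩
    refine ⟨Complex.im ∘ z, fun j => ?_, him⟩
    have hre_j : (z j).re = 0 := congrFun hre j
    apply Complex.ext <;> simp [hre_j]

theorem mem_bdS_union_bdN_iff {z : Fin 3 → ℂ} :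
    z ∈ bdS ∪ bdN ↔ IsBoundaryPair (Complex.re ∘ z) (Complex.im ∘ z) := by
  rw [Set.mem_union, mem_bdS_iff]
  constructor
  · rintro (⟨hre, him⟩ | ⟨hQ, hre₀, hre⟩)
    · rw [hre]
      exact ⟨le_rfl, by simp [Qr], him, by simp [lorentzForm_apply]⟩
    · obtain ⟨hQ_re, hQ_im⟩ := Complex.ext_iff.mp ((Qc_eq_mk z).symm.trans hQ)
      have re_null : Qr (Complex.re ∘ z) = 0 := hre
      simp only [re_null, Complex.one_re, Complex.one_im] at hQ_re hQ_im
      exact ⟨hre₀.le, re_null, by linarith, by linarith⟩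
  · rintro ⟨hre₀, hre, him, horth⟩
    rcases hre₀.eq_or_lt with h | h
    · exact Or.inl ⟨eq_zero_of_Qr_eq_zero hre h.symm, him⟩
    · exact Or.inr ⟨by rw [Qc_eq_mk, hre, him, horth]; apply Complex.ext <;> simp, h, hre⟩

theorem setOf_exists_bmap_eq_bdS_union_bdN :
    {z | ∃ g ∈ Gso, ∃ Y ∈ cone3, bmap g Y = z} = bdS ∪ bdN := by
  ext z
  simp only [Set.mem_ofPred_eq, mem_bdS_union_bdN_iff, bmap_eq_iff]
  constructor
  · rintro ⟨g, hg, Y, hY, hre, him⟩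
    rw [← hre, ← him]
    exact (isBoundaryPair_single_two_iff.mpr hY).mulVec hg
  · intro hz
    obtain ⟨g, hg, him⟩ := Gso.exists_mulVec_single_two_eq hz.spacelike
    have hdet := Gso.isUnit_det hg
    have inv_im : g⁻¹ *ᵥ (Complex.im ∘ z) = Pi.single 2 1 := by
      rw [← him, mulVec_mulVec, nonsing_inv_mul _ hdet, one_mulVec]
    have hpair := hz.mulVec (Gso.inv_mem hg)
    rw [inv_im] at hpair
    refine ⟨g, hg, g⁻¹ *ᵥ (Complex.re ∘ z), isBoundaryPair_single_two_iff.mp hpair, ?_, him⟩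
    rw [mulVec_mulVec, mul_nonsing_inv _ hdet, one_mulVec]

theorem stmt_5_general :
    ({z | ∃ g ∈ Gso, ∃ Y ∈ cone3, bmap g Y = z} = bdS ∪ bdN) ∧
    (∀ g g' : Matrix (Fin 3) (Fin 3) ℝ, IsUnit g'.det → ∀ Y Y' : Fin 3 → ℝ,
      (bmap g Y = bmap g' Y' ↔
        (act (g'⁻¹ * g) z1pt = z1pt ∧ (g'⁻¹ * g).mulVec Y = Y'))) :=
  ⟨setOf_exists_bmap_eq_bdS_union_bdN, fun _ _ hg' _ _ => bmap_eq_bmap_iff hg'⟩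

/-- the map `b : G × 𝒞 → ℂ³` has image exactly `∂Ξ = ∂ₛΞ ∪ ∂ₙΞ`, and it
separates `H`-orbits: `b(g,Y) = b(g',Y')` iff `h = g'⁻¹g` fixes `z₁` (so `h ∈ H`)
and `h·Y = Y'`. -/
theorem stmt_5 :
    ({z | ∃ g ∈ Gso, ∃ Y ∈ cone3, bmap g Y = z} = bdS ∪ bdN) ∧
    (∀ g ∈ Gso, ∀ g' ∈ Gso, ∀ Y ∈ cone3, ∀ Y' ∈ cone3,
      (bmap g Y = bmap g' Y' ↔
        (act (g'⁻¹ * g) z1pt = z1pt ∧ (g'⁻¹ * g).mulVec Y = Y'))) :=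
  ⟨stmt_5_general.1, fun g _ g' hg' Y _ Y' _ => stmt_5_general.2 g g' (Gso.isUnit_det hg') Y Y'⟩
end

section
/- The fundamental group of the topological space ∂Ξ ⊆ ℂ³ (the full boundary of the crown domain of SO_e(1,2)/SO(2)) is isomorphic to ℤ. -/
open Matrix

lemma z1pt_mem : z1pt ∈ bdS ∪ bdN := by
  left
  refine ⟨![0, 0, 1], ?_, ?_⟩
  · intro j
    fin_cases j <;> simp [z1pt]
  · simp [Qr]

/-!
Write a point of `ℂ³` as `x + iy` and read the spatial parts of `x` and `y` as complex numbers
`ξ = x₁ + ix₂` and `η = y₁ + iy₂`. On `∂Ξ` the number `η` is nonzero with modulus `√(1 + y₀²)`,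
while `x` is a null vector of the plane orthogonal to `y`, on which `Q` has signature `(1, 1)`. The
null vectors with `x₀ ≥ 0` form two rays from the origin, hence a line, with coordinate
`a = Im (η̄ξ)` satisfying `x₀ = |a|` and `η̄ξ = |a|y₀ + ia`. So `(y₀, a, η / |η|)` are global
coordinates, `∂Ξ` is homeomorphic to `ℝ² × S¹`, and only the circle contributes to `π₁`.
-/

open ComplexConjugate
open scoped ContinuousMap

section FundamentalGroup

variable {X Y : Type*} [TopologicalSpace X] [TopologicalSpace Y]

/-- The isomorphism of fundamental groups induced by a homotopy equivalence. -/
noncomputable def fundamentalGroupMulEquivOfHomotopyEquiv (e : X ≃ₕ Y) (x : X) :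
    FundamentalGroup X x ≃* FundamentalGroup Y (e x) :=
  (FundamentalGroupoidFunctor.equivOfHomotopyEquiv e).fullyFaithfulFunctor.mulEquivEnd (.mk x)

variable (X Y) in
theorem nonempty_prod_homotopyEquiv_of_contractibleSpace [ContractibleSpace X] :
    Nonempty ((X × Y) ≃ₕ Y) :=
  (ContractibleSpace.hequiv_unit X).map fun e ↦
    (e.prodCongr (.refl Y)).trans (Homeomorph.punitProd Y).toHomotopyEquiv

/-- The isomorphism `ℤ ≃ ℤg` for an element `g` of infinite order. -/
noncomputable def intAddEquivZMultiples {A : Type*} [AddGroup A] {g : A}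
    (hg : ¬IsOfFinAddOrder g) : ℤ ≃+ AddSubgroup.zmultiples g :=
  AddMonoidHom.ofInjective (f := zmultiplesHom A g) (injective_zsmul_iff_not_isOfFinAddOrder.2 hg)

theorem nonempty_fundamentalGroup_circle_mulEquiv_int (u : Circle) :
    Nonempty (FundamentalGroup Circle u ≃* Multiplicative ℤ) := by
  obtain ⟨θ, hθ⟩ := Circle.exp_surjective u
  have hπ : ¬IsOfFinAddOrder (2 * Real.pi) :=
    not_isOfFinAddOrder_of_isAddTorsionFree (by positivity)
  exact ⟨(Circle.isAddQuotientCoveringMap_exp.fundamentalGroupEquiv ⟨θ, hθ⟩).trans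
    (MulOpposite.opMulEquiv.symm.trans (intAddEquivZMultiples hπ).symm.toMultiplicative)⟩

theorem nonempty_fundamentalGroup_mulEquiv_int_of_homeomorph_prod_circle [ContractibleSpace Y]
    (e : X ≃ₜ Y × Circle) (x : X) :
    Nonempty (FundamentalGroup X x ≃* Multiplicative ℤ) := by
  obtain ⟨r⟩ := nonempty_prod_homotopyEquiv_of_contractibleSpace Y Circle
  let f : X ≃ₕ Circle := e.toHomotopyEquiv.trans r
  obtain ⟨g⟩ := nonempty_fundamentalGroup_circle_mulEquiv_int (f x)
  exact ⟨(fundamentalGroupMulEquivOfHomotopyEquiv f x).trans g⟩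

end FundamentalGroup

section QuadraticForm

variable (z : Fin 3 → ℂ)

lemma Qc_re : (Qc z).re = Qr (fun j ↦ (z j).re) - Qr (fun j ↦ (z j).im) := by
  simp only [Qc, Qr, Complex.sub_re, pow_two, Complex.mul_re]
  ring

/-- The spatial part `x₁ + ix₂` of the real part `x` of a point `x + iy` of `ℂ³`. -/
noncomputable def spatialRe : ℂ := (z 1).re + (z 2).re * Complex.I

/-- The spatial part `y₁ + iy₂` of the imaginary part `y` of a point `x + iy` of `ℂ³`. -/
noncomputable def spatialIm : ℂ := (z 1).im + (z 2).im * Complex.I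

@[fun_prop]
lemma continuous_spatialRe : Continuous spatialRe := by
  unfold spatialRe
  fun_prop

@[fun_prop]
lemma continuous_spatialIm : Continuous spatialIm := by
  unfold spatialIm
  fun_prop

lemma Qr_re : Qr (fun j ↦ (z j).re) = (z 0).re ^ 2 - ‖spatialRe z‖ ^ 2 := by
  rw [← Complex.normSq_eq_norm_sq, spatialRe, Complex.normSq_add_mul_I, Qr]
  ring

lemma Qr_im : Qr (fun j ↦ (z j).im) = (z 0).im ^ 2 - ‖spatialIm z‖ ^ 2 := by
  rw [← Complex.normSq_eq_norm_sq, spatialIm, Complex.normSq_add_mul_I, Qr]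
  ring

lemma Qc_im : (Qc z).im =
    2 * ((z 0).re * (z 0).im - (conj (spatialIm z) * spatialRe z).re) := by
  have hinner : (conj (spatialIm z) * spatialRe z).re =
      (z 1).re * (z 1).im + (z 2).re * (z 2).im := by
    simp [spatialRe, spatialIm, mul_comm]
  rw [hinner]
  simp only [Qc, Complex.sub_im, pow_two, Complex.mul_im]
  ring

/-- The coordinate `Im (η̄ξ) = x₂y₁ - x₁y₂` along the pair of null rays orthogonal to `y`, for a
point `x + iy` with spatial parts `ξ` and `η`; its sign tells the two rays apart. -/
noncomputable def nullCoordinate : ℝ := (conj (spatialIm z) * spatialRe z).im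

@[fun_prop]
lemma continuous_nullCoordinate : Continuous nullCoordinate :=
  Complex.continuous_im.comp
    ((Complex.continuous_conj.comp continuous_spatialIm).mul continuous_spatialRe)

variable {z}

lemma eq_of_spatialRe_eq_of_spatialIm_eq {w : Fin 3 → ℂ} (h₀ : z 0 = w 0)
    (hRe : spatialRe z = spatialRe w) (hIm : spatialIm z = spatialIm w) : z = w := by
  obtain ⟨hRe₁, hRe₂⟩ : (z 1).re = (w 1).re ∧ (z 2).re = (w 2).re := by
    simpa [spatialRe, Complex.ext_iff] using hRe
  obtain ⟨hIm₁, hIm₂⟩ : (z 1).im = (w 1).im ∧ (z 2).im = (w 2).im := by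
    simpa [spatialIm, Complex.ext_iff] using hIm
  funext j
  fin_cases j
  exacts [h₀, Complex.ext hRe₁ hIm₁, Complex.ext hRe₂ hIm₂]

lemma mem_bdS_iff_s6 : z ∈ bdS ↔ (∀ j, (z j).re = 0) ∧ Qr (fun j ↦ (z j).im) = -1 := by
  constructor
  · rintro ⟨y, hy, hQ⟩
    simpa [hy] using hQ
  · rintro ⟨hre, hQ⟩
    exact ⟨_, fun j ↦ Complex.ext (by simp [hre j]) (by simp), hQ⟩

theorem mem_bdS_union_bdN_iff_s6 : z ∈ bdS ∪ bdN ↔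
    (z 0).re = ‖spatialRe z‖ ∧ ‖spatialIm z‖ ^ 2 = 1 + (z 0).im ^ 2 ∧
      (conj (spatialIm z) * spatialRe z).re = (z 0).re * (z 0).im := by
  constructor
  · rintro (hS | ⟨hQ, hpos, hnull⟩)
    · obtain ⟨hre, hQ⟩ := mem_bdS_iff_s6.1 hS
      have hξ : spatialRe z = 0 := by simp [spatialRe, hre]
      rw [Qr_im] at hQ
      exact ⟨by simp [hre, hξ], by linarith, by simp [hre, hξ]⟩
    · have hre : (Qc z).re = 1 := by simp [hQ]
      have him : (Qc z).im = 0 := by simp [hQ]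
      rw [Qc_re, hnull, Qr_im] at hre
      rw [Qc_im] at him
      rw [Qr_re, sub_eq_zero] at hnull
      exact ⟨(sq_eq_sq₀ hpos.le (norm_nonneg _)).1 hnull, by linarith, by linarith⟩
  · rintro ⟨hnorm, hQ, horth⟩
    have hre : Qr (fun j ↦ (z j).re) = 0 := by rw [Qr_re, hnorm, sub_self]
    have him : Qr (fun j ↦ (z j).im) = -1 := by rw [Qr_im, hQ]; ring
    rcases (norm_nonneg (spatialRe z)).eq_or_lt with hξ | hξ
    · left
      obtain ⟨h₁, h₂⟩ : (z 1).re = 0 ∧ (z 2).re = 0 := by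
        simpa [spatialRe, Complex.ext_iff] using norm_eq_zero.1 hξ.symm
      exact mem_bdS_iff_s6.2 ⟨Fin.forall_fin_succ.2 (by simp [hnorm, ← hξ, h₁, h₂]), him⟩
    · right
      refine ⟨Complex.ext ?_ ?_, hnorm ▸ hξ, hre⟩
      · simp [Qc_re, hre, him]
      · simp [Qc_im, horth]

end QuadraticForm

section BoundaryCoordinates

lemma sqrt_one_add_sq_ne_zero (t : ℝ) : √(1 + t ^ 2) ≠ 0 :=
  (Real.sqrt_pos.2 (by positivity)).ne'

lemma abs_im_conj_mul_eq_norm {ξ η : ℂ} {t : ℝ} (hη : ‖η‖ ^ 2 = 1 + t ^ 2)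
    (horth : (conj η * ξ).re = ‖ξ‖ * t) : |(conj η * ξ).im| = ‖ξ‖ := by
  rw [← abs_norm ξ, ← sq_eq_sq_iff_abs_eq_abs]
  have hnormSq : (conj η * ξ).re ^ 2 + (conj η * ξ).im ^ 2 = (1 + t ^ 2) * ‖ξ‖ ^ 2 := by
    rw [← hη, ← mul_pow, ← RCLike.norm_conj η, ← norm_mul, Complex.sq_norm, Complex.normSq_apply]
    ring
  rw [horth] at hnormSq
  linear_combination hnormSq

/-- The point of `∂Ξ` with coordinates `y₀ = t`, `Im (η̄ξ) = a` and `η / |η| = u`. The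
formula for `ξ` solves `η̄ξ = |a|t + ia`. -/
noncomputable def boundaryPoint (t a : ℝ) (u : Circle) : Fin 3 → ℂ :=
  let η : ℂ := √(1 + t ^ 2) * u
  let ξ : ℂ := (|a| * t + a * Complex.I) * u / √(1 + t ^ 2)
  ![|a| + t * Complex.I, ξ.re + η.re * Complex.I, ξ.im + η.im * Complex.I]

lemma continuous_boundaryPoint :
    Continuous fun p : (ℝ × ℝ) × Circle ↦ boundaryPoint p.1.1 p.1.2 p.2 := by
  have hs (p : (ℝ × ℝ) × Circle) : (√(1 + p.1.1 ^ 2) : ℂ) ≠ 0 :=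
    Complex.ofReal_ne_zero.2 (sqrt_one_add_sq_ne_zero _)
  simp only [boundaryPoint]
  fun_prop (disch := exact hs)

variable (t a : ℝ) (u : Circle)

lemma boundaryPoint_zero : boundaryPoint t a u 0 = |a| + t * Complex.I := rfl

lemma spatialRe_boundaryPoint :
    spatialRe (boundaryPoint t a u) = (|a| * t + a * Complex.I) * u / √(1 + t ^ 2) := by
  apply Complex.ext <;> simp [spatialRe, boundaryPoint]

lemma spatialIm_boundaryPoint : spatialIm (boundaryPoint t a u) = √(1 + t ^ 2) * u := by
  apply Complex.ext <;> simp [spatialIm, boundaryPoint]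

lemma conj_spatialIm_mul_spatialRe_boundaryPoint :
    conj (spatialIm (boundaryPoint t a u)) * spatialRe (boundaryPoint t a u) =
      |a| * t + a * Complex.I := by
  have hs : (√(1 + t ^ 2) : ℂ) ≠ 0 := Complex.ofReal_ne_zero.2 (sqrt_one_add_sq_ne_zero t)
  have hu : conj (u : ℂ) * u = 1 := by rw [← Complex.normSq_eq_conj_mul_self]; simp
  rw [spatialIm_boundaryPoint, spatialRe_boundaryPoint, map_mul, Complex.conj_ofReal]
  field_simp
  linear_combination (|a| * t + a * Complex.I : ℂ) * hu

lemma nullCoordinate_boundaryPoint : nullCoordinate (boundaryPoint t a u) = a := by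
  simp [nullCoordinate, conj_spatialIm_mul_spatialRe_boundaryPoint]

lemma norm_spatialIm_boundaryPoint : ‖spatialIm (boundaryPoint t a u)‖ = √(1 + t ^ 2) := by
  rw [spatialIm_boundaryPoint, norm_mul, Circle.norm_coe, mul_one, Complex.norm_real,
    Real.norm_of_nonneg (Real.sqrt_nonneg _)]

lemma norm_spatialRe_boundaryPoint : ‖spatialRe (boundaryPoint t a u)‖ = |a| := by
  have hnum : ‖(|a| * t + a * Complex.I : ℂ)‖ = |a| * √(1 + t ^ 2) := by
    rw [← Complex.ofReal_mul, Complex.norm_add_mul_I, ← Real.sqrt_sq_eq_abs a,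
      ← Real.sqrt_mul (sq_nonneg a), mul_pow, Real.sq_sqrt (sq_nonneg a)]
    ring_nf
  have hs : √(1 + t ^ 2) ≠ 0 := sqrt_one_add_sq_ne_zero t
  rw [spatialRe_boundaryPoint, norm_div, norm_mul, hnum, Circle.norm_coe, Complex.norm_real,
    Real.norm_of_nonneg (Real.sqrt_nonneg _)]
  field_simp

lemma boundaryPoint_mem : boundaryPoint t a u ∈ bdS ∪ bdN := by
  rw [mem_bdS_union_bdN_iff_s6, norm_spatialRe_boundaryPoint, norm_spatialIm_boundaryPoint,
    conj_spatialIm_mul_spatialRe_boundaryPoint, Real.sq_sqrt (by positivity),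
    boundaryPoint_zero]
  simp

variable (z : ↥(bdS ∪ bdN))

lemma norm_spatialIm_eq_sqrt : ‖spatialIm z‖ = √(1 + (z.1 0).im ^ 2) := by
  rw [← (mem_bdS_union_bdN_iff_s6.1 z.2).2.1, Real.sqrt_sq (norm_nonneg _)]

lemma spatialIm_ne_zero : spatialIm z ≠ 0 := by
  rw [← norm_ne_zero_iff, norm_spatialIm_eq_sqrt]
  exact sqrt_one_add_sq_ne_zero _

lemma abs_nullCoordinate : |nullCoordinate z| = (z.1 0).re := by
  obtain ⟨hnorm, hQ, horth⟩ := mem_bdS_union_bdN_iff_s6.1 z.2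
  rw [nullCoordinate, abs_im_conj_mul_eq_norm hQ (hnorm ▸ horth), hnorm]

/-- The direction `η / |η|` of the spatial part `η` of the imaginary part of a point of `∂Ξ`. -/
noncomputable def spatialImDirection : Circle :=
  ⟨spatialIm z / ‖spatialIm z‖,
    mem_sphere_zero_iff_norm.2 (by simp [spatialIm_ne_zero z])⟩

lemma coe_spatialImDirection : (spatialImDirection z : ℂ) = spatialIm z / ‖spatialIm z‖ := rfl

@[fun_prop]
lemma continuous_spatialImDirection : Continuous spatialImDirection := by
  have hη (z : ↥(bdS ∪ bdN)) : (‖spatialIm z‖ : ℂ) ≠ 0 := by simpa using spatialIm_ne_zero z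
  exact Continuous.subtype_mk (by fun_prop (disch := exact hη)) _

lemma spatialImDirection_boundaryPoint :
    spatialImDirection ⟨boundaryPoint t a u, boundaryPoint_mem t a u⟩ = u := by
  have hs : (√(1 + t ^ 2) : ℂ) ≠ 0 := Complex.ofReal_ne_zero.2 (sqrt_one_add_sq_ne_zero t)
  apply Circle.ext
  rw [coe_spatialImDirection, norm_spatialIm_boundaryPoint, spatialIm_boundaryPoint,
    mul_div_cancel_left₀ _ hs]

lemma boundaryPoint_spatialImDirection :
    boundaryPoint (z.1 0).im (nullCoordinate z) (spatialImDirection z) = z := by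
  obtain ⟨-, -, horth⟩ := mem_bdS_union_bdN_iff_s6.1 z.2
  have hconj_mul : ((z.1 0).re * (z.1 0).im + nullCoordinate z * Complex.I : ℂ) =
      conj (spatialIm z) * spatialRe z := by
    rw [← Complex.ofReal_mul, ← horth, nullCoordinate, Complex.re_add_im]
  have hη : (‖spatialIm z‖ : ℂ) ≠ 0 := by simpa using spatialIm_ne_zero z
  apply eq_of_spatialRe_eq_of_spatialIm_eq
  · rw [boundaryPoint_zero, abs_nullCoordinate, Complex.re_add_im]
  · rw [spatialRe_boundaryPoint, abs_nullCoordinate, hconj_mul, ← norm_spatialIm_eq_sqrt,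
      coe_spatialImDirection]
    field_simp
    linear_combination spatialRe z * Complex.conj_mul' (spatialIm z)
  · rw [spatialIm_boundaryPoint, ← norm_spatialIm_eq_sqrt, coe_spatialImDirection,
      mul_div_cancel₀ _ hη]

/-- The global coordinates `(y₀, Im (η̄ξ), η / |η|)` on `∂Ξ`. -/
noncomputable def boundaryHomeomorph : ↥(bdS ∪ bdN) ≃ₜ (ℝ × ℝ) × Circle where
  toFun z := (((z.1 0).im, nullCoordinate z), spatialImDirection z)
  invFun p := ⟨boundaryPoint p.1.1 p.1.2 p.2, boundaryPoint_mem _ _ _⟩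
  left_inv z := Subtype.ext (boundaryPoint_spatialImDirection z)
  right_inv p := by
    simp [boundaryPoint_zero, nullCoordinate_boundaryPoint, spatialImDirection_boundaryPoint]
  continuous_toFun := by
    have hy₀ : Continuous fun z : ↥(bdS ∪ bdN) ↦ (z.1 0).im :=
      Complex.continuous_im.comp ((continuous_apply 0).comp continuous_subtype_val)
    fun_prop
  continuous_invFun := continuous_boundaryPoint.subtype_mk _

end BoundaryCoordinates

/-- the fundamental group of the full boundary `∂Ξ = ∂ₛΞ ∪ ∂ₙΞ` of the
crown of `SO_e(1,2)/SO(2)` (with the subspace topology of `ℂ³`, based at `z₁`) is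
isomorphic to `ℤ`. -/
theorem stmt_6 :
    Nonempty (FundamentalGroup (↥(bdS ∪ bdN)) ⟨z1pt, z1pt_mem⟩ ≃* Multiplicative ℤ) :=
  nonempty_fundamentalGroup_mulEquiv_int_of_homeomorph_prod_circle boundaryHomeomorph _
end

section
/- For every w ∈ Ξ_N, the stabilizer G_w = {g ∈ G : g·w = w} is a compact subset of GL(3,ℝ). Equivalently: for all g₀ ∈ SO_e(1,2) and z ∈ ℂ, the stabilizer in SO_e(1,2) of the point g₀·n_z·x₀ ∈ ℂ³ is compact. -/
open Matrix

/-- The unipotent matrices `n_z`. -/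
noncomputable def nmat (z : ℂ) : Matrix (Fin 3) (Fin 3) ℂ :=
  !![1 + z ^ 2 / 2, z, -(z ^ 2) / 2;
     z, 1, -z;
     z ^ 2 / 2, z, 1 - z ^ 2 / 2]

/-- The base point `x₀ = (1,0,0)`. -/
def x0c : Fin 3 → ℂ := ![1, 0, 0]

/-- `Ξ_N = G·N_ℂ·x₀`. -/
noncomputable def XiN : Set (Fin 3 → ℂ) :=
  {w | ∃ g ∈ Gso, ∃ z : ℂ, w = act g ((nmat z).mulVec x0c)}

/-!
For `g` in the real group, `g w = w` means that `g` fixes the real vectors `u = Re w` and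
`v = Im w`.

If `u` and `v` are linearly independent, then `g - 1` has rank at most one. Together with
`det g = 1` this makes `g` a transvection, and a nondegenerate symmetric form in characteristic
other than two admits no nontrivial isometric transvections, so the stabilizer is trivial.

If `v = c u`, then `Q(w) = 1` and `u ≠ 0` force `c = 0` and `Q(u) = 1`. Reversing the sign of the
form on the orthogonal complement of `u` gives a positive definite form preserved by every isometry
fixing `u`, and the isometries of a positive definite form are a conjugate of the orthogonal group.

Both `Q = 1` and `Re ≠ 0` hold at `n_z x₀ = (1 + z²/2, z, z²/2)` and are preserved by the group.
-/

section CommRing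

variable {R n : Type*} [CommRing R] [Fintype n] {J g : Matrix n n R}

lemma mulVec_dotProduct_mulVec_mulVec_eq (hg : gᵀ * J * g = J) (x y : n → R) :
    (g *ᵥ x) ⬝ᵥ J *ᵥ (g *ᵥ y) = x ⬝ᵥ J *ᵥ y := by
  conv_rhs => rw [← hg, ← mulVec_mulVec, ← mulVec_mulVec, dotProduct_mulVec, vecMul_transpose]

lemma transpose_mulVec_mulVec_eq_of_mulVec_eq (hg : gᵀ * J * g = J) {u : n → R} (hu : g *ᵥ u = u) :
    gᵀ *ᵥ (J *ᵥ u) = J *ᵥ u := by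
  conv_rhs => rw [← hg, ← mulVec_mulVec, hu, ← mulVec_mulVec]

lemma transpose_mul_vecMulVec_mul_eq {p : n → R} (hp : gᵀ *ᵥ p = p) :
    gᵀ * vecMulVec p p * g = vecMulVec p p := by
  rw [mul_vecMulVec, vecMulVec_mul, hp, ← mulVec_transpose, hp]

lemma dotProduct_mulVec_comm_of_isSymm (hJ : J.IsSymm) (x y : n → R) :
    x ⬝ᵥ J *ᵥ y = y ⬝ᵥ J *ᵥ x := by
  rw [dotProduct_mulVec, ← mulVec_transpose, hJ.eq, dotProduct_comm]

lemma dotProduct_eq_zero_of_det_one_add_vecMulVec [DecidableEq n] {a f : n → R}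
    (h : (1 + vecMulVec a f).det = 1) : f ⬝ᵥ a = 0 := by
  rwa [vecMulVec_eq Unit, det_one_add_replicateCol_mul_replicateRow, add_eq_left] at h

end CommRing

section Field

variable {K m n : Type*} [Field K] [Fintype n]

lemma exists_eq_vecMulVec_of_rank_le_one [Finite m] {M : Matrix m n K} (hM : M.rank ≤ 1) :
    ∃ (a : m → K) (f : n → K), M = vecMulVec a f := by
  classical
  rw [rank, Submodule.finrank_le_one_iff_isPrincipal] at hM
  obtain ⟨a, ha⟩ := hM.principal
  have col_mem_span (j : n) : ∃ c : K, c • a = M.col j := by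
    rw [← Submodule.mem_span_singleton, ← ha]
    exact ⟨Pi.single j 1, by simp⟩
  choose f hf using col_mem_span
  refine ⟨a, f, ext fun i j => ?_⟩
  rw [vecMulVec_apply, mul_comm, ← smul_eq_mul, ← Pi.smul_apply, hf, col_apply]

lemma rank_add_card_le_of_mulVec_eq_zero {ι : Type*} [Fintype ι] {M : Matrix m n K}
    {v : ι → n → K} (hv : LinearIndependent K v) (hM : ∀ i, M *ᵥ v i = 0) :
    M.rank + Fintype.card ι ≤ Fintype.card n := by
  have span_le_ker : Submodule.span K (Set.range v) ≤ LinearMap.ker M.mulVecLin :=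
    Submodule.span_le.2 (Set.range_subset_iff.2 hM)
  calc M.rank + Fintype.card ι
      ≤ M.rank + Module.finrank K (LinearMap.ker M.mulVecLin) := by
        rw [← finrank_span_eq_card hv]
        exact Nat.add_le_add_left (Submodule.finrank_mono span_le_ker) _
    _ = Fintype.card n := by
        rw [rank, LinearMap.finrank_range_add_finrank_ker, Module.finrank_fintype_fun_eq_card]

variable [DecidableEq n] [NeZero (2 : K)] {J : Matrix n n K}

/- `f` and `J a` have to satisfy `f (J a)ᵀ + (J a) fᵀ + (aᵀ J a) f fᵀ = 0`; contracting with `a`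
shows that `a` is isotropic, and then the symmetric product of `f` and `J a` vanishes. -/
lemma vecMulVec_eq_zero_of_isometry (hJ : J.IsSymm) (hJ_unit : IsUnit J) {a f : n → K}
    (hg : (1 + vecMulVec a f)ᵀ * J * (1 + vecMulVec a f) = J) (hfa : f ⬝ᵥ a = 0) :
    vecMulVec a f = 0 := by
  have gram (i j : n) : f i * (J *ᵥ a) j + (J *ᵥ a) i * f j + (J *ᵥ a) ⬝ᵥ a * (f i * f j) = 0 := by
    have entry := congr_fun₂ hg i j
    simp only [transpose_add, transpose_one, transpose_vecMulVec, add_mul, mul_add, one_mul,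
      mul_one, vecMulVec_mul, mul_vecMulVec, vecMulVec_mulVec, ← mulVec_transpose J a, hJ.eq,
      Matrix.add_apply, vecMulVec_apply, Pi.smul_apply, MulOpposite.smul_eq_mul_unop,
      MulOpposite.unop_op] at entry
    linear_combination entry
  rw [vecMulVec_eq_zero, or_iff_not_imp_right]
  intro hf
  obtain ⟨k, hk : f k ≠ 0⟩ := Function.ne_iff.1 hf
  have isotropic : (J *ᵥ a) ⬝ᵥ a = 0 := by
    have row : f k • (J *ᵥ a) + (J *ᵥ a) k • f + ((J *ᵥ a) ⬝ᵥ a * f k) • f = 0 := by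
      ext j
      simpa [mul_assoc] using gram k j
    simpa [add_dotProduct, hfa, hk] using congrArg (· ⬝ᵥ a) row
  have apply_k : (J *ᵥ a) k = 0 := by
    simpa [isotropic, mul_comm ((J *ᵥ a) k), ← two_mul, hk, two_ne_zero] using gram k k
  have mulVec_eq_zero : J *ᵥ a = 0 := by
    ext i
    simpa [isotropic, apply_k, hk] using gram i k
  exact (mulVec_injective_iff_isUnit.2 hJ_unit) (by rw [mulVec_eq_zero, mulVec_zero])

theorem eq_one_of_isometry_of_det_eq_one_of_fixed {ι : Type*} [Fintype ι] (hJ : J.IsSymm)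
    (hJ_unit : IsUnit J) {g : Matrix n n K} (hg : gᵀ * J * g = J) (hdet : g.det = 1)
    {v : ι → n → K} (hv : LinearIndependent K v) (hcard : Fintype.card n ≤ Fintype.card ι + 1)
    (hfix : ∀ i, g *ᵥ v i = v i) : g = 1 := by
  have rank_le_one : (g - 1).rank ≤ 1 := by
    have := rank_add_card_le_of_mulVec_eq_zero (M := g - 1) hv
      fun i => by rw [sub_mulVec, hfix, one_mulVec, sub_self]
    lia
  obtain ⟨a, f, haf⟩ := exists_eq_vecMulVec_of_rank_le_one rank_le_one
  obtain rfl : g = 1 + vecMulVec a f := by rw [← haf, add_sub_cancel]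
  rw [vecMulVec_eq_zero_of_isometry hJ hJ_unit hg
    (dotProduct_eq_zero_of_det_one_add_vecMulVec hdet), add_zero]

end Field

section Compact

variable {𝕜 n : Type*} [RCLike 𝕜] [Fintype n]

lemma isCompact_unitaryGroup [DecidableEq n] :
    IsCompact (unitaryGroup n 𝕜 : Set (Matrix n n 𝕜)) := by
  have box : IsCompact (Set.univ.pi fun _ : n => Set.univ.pi fun _ : n =>
      Metric.closedBall (0 : 𝕜) 1) :=
    isCompact_univ_pi fun _ => isCompact_univ_pi fun _ => isCompact_closedBall 0 1
  refine IsCompact.of_isClosed_subset (X := Matrix n n 𝕜) box isClosed_unitary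
    fun U hU i _ j _ => ?_
  rw [mem_closedBall_zero_iff]
  exact entry_norm_bound_of_unitary hU i j

open scoped MatrixOrder ComplexOrder in
lemma exists_isUnit_eq_conjTranspose_mul_self_of_posDef [DecidableEq n] {P : Matrix n n 𝕜}
    (hP : P.PosDef) : ∃ S, IsUnit S ∧ P = Sᴴ * S := by
  obtain ⟨S, hS⟩ := CStarAlgebra.nonneg_iff_eq_star_mul_self.1 hP.posSemidef.nonneg
  exact ⟨S, isUnit_of_mul_isUnit_right (hS ▸ hP.isUnit), hS⟩

open scoped ComplexOrder in
theorem isCompact_setOf_conjTranspose_mul_mul_eq_of_posDef {P : Matrix n n 𝕜} (hP : P.PosDef) :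
    IsCompact {g : Matrix n n 𝕜 | gᴴ * P * g = P} := by
  classical
  obtain ⟨S, hS, rfl⟩ := exists_isUnit_eq_conjTranspose_mul_self_of_posDef hP
  have hS_det : IsUnit S.det := (isUnit_iff_isUnit_det S).1 hS
  have conj_compact :
      IsCompact ((fun U => S⁻¹ * U * S) '' (unitaryGroup n 𝕜 : Set (Matrix n n 𝕜))) :=
    isCompact_unitaryGroup.image (by fun_prop)
  refine conj_compact.of_isClosed_subset (isClosed_eq (by fun_prop) continuous_const) fun g hg => ?_
  have hg' : gᴴ * (Sᴴ * S) * g = Sᴴ * S := hg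
  refine ⟨S * g * S⁻¹, mem_unitaryGroup_iff'.2 ?_, ?_⟩
  · calc star (S * g * S⁻¹) * (S * g * S⁻¹) = (S⁻¹)ᴴ * (gᴴ * (Sᴴ * S) * g) * S⁻¹ := by
          simp only [star_eq_conjTranspose, conjTranspose_mul, mul_assoc]
      _ = (S * S⁻¹)ᴴ * (S * S⁻¹) := by rw [hg', conjTranspose_mul]; simp only [mul_assoc]
      _ = 1 := by rw [mul_nonsing_inv S hS_det, conjTranspose_one, one_mul]
  · calc S⁻¹ * (S * g * S⁻¹) * S = (S⁻¹ * S) * g * (S⁻¹ * S) := by simp only [mul_assoc]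
      _ = g := by rw [nonsing_inv_mul S hS_det, one_mul, mul_one]

end Compact

/-- The Gram matrix `diag(1, -1, …, -1)` of the Minkowski form on `ℝ^(1+n)`, in the mostly-minus
signature and with `0` as the index of the time coordinate. -/
def minkowskiMatrix (n : ℕ) : Matrix (Fin (n + 1)) (Fin (n + 1)) ℝ :=
  diagonal (Fin.cons 1 fun _ => -1)

namespace minkowskiMatrix

variable {n : ℕ} {u x : Fin (n + 1) → ℝ}

lemma isSymm : (minkowskiMatrix n).IsSymm := isSymm_diagonal _

lemma mul_self : minkowskiMatrix n * minkowskiMatrix n = 1 := by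
  rw [minkowskiMatrix, diagonal_mul_diagonal, ← diagonal_one]
  congr 1
  ext i
  cases i using Fin.cases <;> simp

lemma isUnit : IsUnit (minkowskiMatrix n) := IsUnit.of_mul_eq_one _ mul_self

lemma dotProduct_mulVec_eq (x y : Fin (n + 1) → ℝ) :
    x ⬝ᵥ minkowskiMatrix n *ᵥ y = x 0 * y 0 - ∑ i : Fin n, x i.succ * y i.succ := by
  simp [minkowskiMatrix, dotProduct, mulVec_diagonal, Fin.sum_univ_succ, sub_eq_add_neg]

lemma neg_of_orthogonal_timelike (hu : 0 < u ⬝ᵥ minkowskiMatrix n *ᵥ u)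
    (hux : u ⬝ᵥ minkowskiMatrix n *ᵥ x = 0) (hx : x ≠ 0) :
    x ⬝ᵥ minkowskiMatrix n *ᵥ x < 0 := by
  simp only [dotProduct_mulVec_eq, sub_eq_zero, ← sq, sub_pos, sub_neg] at hu hux ⊢
  have spatial_nonneg : 0 ≤ ∑ i : Fin n, u i.succ ^ 2 := by positivity
  have time_sq_pos : 0 < u 0 ^ 2 := spatial_nonneg.trans_lt hu
  have cauchy_schwarz : (u 0 * x 0) ^ 2 ≤ (∑ i : Fin n, u i.succ ^ 2) * ∑ i : Fin n, x i.succ ^ 2 :=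
    hux ▸ Finset.sum_mul_sq_le_sq_mul_sq _ _ _
  have spatial_pos : 0 < ∑ i : Fin n, x i.succ ^ 2 := by
    by_contra! h
    have tail_eq_zero (i : Fin n) : x i.succ = 0 := by
      rw [← sq_eq_zero_iff]
      exact (Finset.sum_eq_zero_iff_of_nonneg fun _ _ => sq_nonneg _).1
        (h.antisymm (by positivity)) i (Finset.mem_univ i)
    have head_eq_zero : x 0 = 0 := by
      simpa [tail_eq_zero, (sq_pos_iff.1 time_sq_pos)] using hux
    exact hx (funext (Fin.cases head_eq_zero tail_eq_zero))
  refine lt_of_mul_lt_mul_left ?_ time_sq_pos.le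
  calc u 0 ^ 2 * x 0 ^ 2 = (u 0 * x 0) ^ 2 := (mul_pow _ _ _).symm
    _ ≤ _ := cauchy_schwarz
    _ < u 0 ^ 2 * ∑ i : Fin n, x i.succ ^ 2 := mul_lt_mul_of_pos_right hu spatial_pos

lemma mul_lt_two_mul_sq_of_timelike (hu : 0 < u ⬝ᵥ minkowskiMatrix n *ᵥ u) (hx : x ≠ 0) :
    (u ⬝ᵥ minkowskiMatrix n *ᵥ u) * (x ⬝ᵥ minkowskiMatrix n *ᵥ x)
      < 2 * (u ⬝ᵥ minkowskiMatrix n *ᵥ x) ^ 2 := by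
  set q := u ⬝ᵥ minkowskiMatrix n *ᵥ u
  set b := u ⬝ᵥ minkowskiMatrix n *ᵥ x
  set y := q • x - b • u with hy
  have orthogonal : u ⬝ᵥ minkowskiMatrix n *ᵥ y = 0 := by
    simp only [hy, mulVec_sub, mulVec_smul, dotProduct_sub, dotProduct_smul, smul_eq_mul]
    ring
  have norm_y : y ⬝ᵥ minkowskiMatrix n *ᵥ y
      = q * (q * (x ⬝ᵥ minkowskiMatrix n *ᵥ x) - b ^ 2) := by
    simp only [hy, mulVec_sub, mulVec_smul, dotProduct_sub, dotProduct_smul, sub_dotProduct,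
      smul_dotProduct, smul_eq_mul, dotProduct_mulVec_comm_of_isSymm isSymm x u]
    ring
  rcases eq_or_ne y 0 with y_eq_zero | y_ne_zero
  · have b_ne_zero : b ≠ 0 := fun b_eq_zero => by
      simp only [hy, b_eq_zero, zero_smul, sub_zero, smul_eq_zero, hu.ne', hx, or_self] at y_eq_zero
    have : q * (x ⬝ᵥ minkowskiMatrix n *ᵥ x) - b ^ 2 = 0 := by
      simpa [y_eq_zero, hu.ne'] using norm_y
    linarith [sq_pos_of_ne_zero b_ne_zero]
  · have := neg_of_orthogonal_timelike hu orthogonal y_ne_zero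
    linarith [sq_nonneg b, (pos_iff_neg_of_mul_neg (norm_y ▸ this)).1 hu]

/-- The Gram matrix of the form that equals the Minkowski form on the line spanned by `u` and minus
the Minkowski form on the orthogonal complement of `u`. It serves as a positive definite form
invariant under all Lorentz transformations fixing a timelike `u`. It is meaningful only for `u`
not null. -/
noncomputable def wickRotation (u : Fin (n + 1) → ℝ) : Matrix (Fin (n + 1)) (Fin (n + 1)) ℝ :=
  (2 / (u ⬝ᵥ minkowskiMatrix n *ᵥ u)) •
    vecMulVec (minkowskiMatrix n *ᵥ u) (minkowskiMatrix n *ᵥ u) - minkowskiMatrix n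

lemma posDef_wickRotation (hu : 0 < u ⬝ᵥ minkowskiMatrix n *ᵥ u) : (wickRotation u).PosDef := by
  refine .of_dotProduct_mulVec_pos ?_ fun x hx => ?_
  · rw [IsHermitian, conjTranspose_eq_transpose_of_trivial]
    simp only [wickRotation, transpose_sub, transpose_smul, transpose_vecMulVec, isSymm.eq]
  · have quadratic_form : star x ⬝ᵥ wickRotation u *ᵥ x = 2 / (u ⬝ᵥ minkowskiMatrix n *ᵥ u)
        * (u ⬝ᵥ minkowskiMatrix n *ᵥ x) ^ 2 - x ⬝ᵥ minkowskiMatrix n *ᵥ x := by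
      rw [star_trivial, wickRotation, sub_mulVec, smul_mulVec, vecMulVec_mulVec, op_smul_eq_smul,
        dotProduct_sub, dotProduct_smul, dotProduct_smul, dotProduct_comm _ x,
        dotProduct_mulVec_comm_of_isSymm isSymm x u]
      simp only [smul_eq_mul]
      ring
    rw [quadratic_form, sub_pos, div_mul_eq_mul_div, lt_div_iff₀' hu]
    exact mul_lt_two_mul_sq_of_timelike hu hx

lemma transpose_mul_wickRotation_mul_eq {g : Matrix (Fin (n + 1)) (Fin (n + 1)) ℝ}
    (hg : gᵀ * minkowskiMatrix n * g = minkowskiMatrix n) (hgu : g *ᵥ u = u) :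
    gᵀ * wickRotation u * g = wickRotation u := by
  rw [wickRotation, mul_sub, sub_mul, mul_smul_comm, smul_mul_assoc, hg,
    transpose_mul_vecMulVec_mul_eq (transpose_mulVec_mulVec_eq_of_mulVec_eq hg hgu)]

theorem isCompact_stabilizer_of_timelike (hu : 0 < u ⬝ᵥ minkowskiMatrix n *ᵥ u) :
    IsCompact {g : Matrix (Fin (n + 1)) (Fin (n + 1)) ℝ |
      gᵀ * minkowskiMatrix n * g = minkowskiMatrix n ∧ g *ᵥ u = u} := by
  refine (isCompact_setOf_conjTranspose_mul_mul_eq_of_posDef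
    (posDef_wickRotation hu)).of_isClosed_subset ?_ fun g ⟨hg, hgu⟩ => ?_
  · exact (isClosed_eq (by fun_prop) continuous_const).inter
      (isClosed_eq (by fun_prop) continuous_const)
  · rw [Set.mem_ofPred_eq, conjTranspose_eq_transpose_of_trivial]
    exact transpose_mul_wickRotation_mul_eq hg hgu

lemma one_le_sq_apply_zero_zero {g : Matrix (Fin (n + 1)) (Fin (n + 1)) ℝ}
    (hg : gᵀ * minkowskiMatrix n * g = minkowskiMatrix n) : 1 ≤ g 0 0 ^ 2 := by
  have first_column : g 0 0 ^ 2 - ∑ i : Fin n, g i.succ 0 ^ 2 = 1 := by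
    have := mulVec_dotProduct_mulVec_mulVec_eq hg (Pi.single 0 1) (Pi.single 0 1)
    rw [dotProduct_mulVec_eq, dotProduct_mulVec_eq] at this
    simpa [← sq] using this
  have spatial_nonneg : 0 ≤ ∑ i : Fin n, g i.succ 0 ^ 2 := by positivity
  linarith

end minkowskiMatrix

lemma eta3_eq_minkowskiMatrix : eta3 = minkowskiMatrix 2 := by
  rw [eta3, minkowskiMatrix]
  congr 1
  ext i
  fin_cases i <;> rfl

lemma Gso_eq_setOf_nonneg :
    Gso = {g | gᵀ * eta3 * g = eta3 ∧ g.det = 1 ∧ 0 ≤ g 0 0} := by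
  ext g
  refine and_congr_right fun hg => and_congr_right fun _ => ⟨le_of_lt, fun h => h.lt_of_ne' ?_⟩
  have one_le : 1 ≤ g 0 0 ^ 2 :=
    minkowskiMatrix.one_le_sq_apply_zero_zero (eta3_eq_minkowskiMatrix ▸ hg)
  exact sq_pos_iff.1 (one_pos.trans_le one_le)

lemma isClosed_Gso : IsClosed Gso := by
  rw [Gso_eq_setOf_nonneg]
  exact (isClosed_eq (by fun_prop) continuous_const).inter
    ((isClosed_eq (by fun_prop) continuous_const).inter
      (isClosed_le continuous_const (continuous_id.matrix_elem 0 0)))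

lemma re_act (g : Matrix (Fin 3) (Fin 3) ℝ) (w : Fin 3 → ℂ) :
    Complex.re ∘ act g w = g *ᵥ (Complex.re ∘ w) := by
  ext i
  simp [act, mulVec, dotProduct]

lemma im_act (g : Matrix (Fin 3) (Fin 3) ℝ) (w : Fin 3 → ℂ) :
    Complex.im ∘ act g w = g *ᵥ (Complex.im ∘ w) := by
  ext i
  simp [act, mulVec, dotProduct]

lemma dotProduct_eta3_mulVec (x y : Fin 3 → ℝ) :
    x ⬝ᵥ eta3 *ᵥ y = x 0 * y 0 - x 1 * y 1 - x 2 * y 2 := by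
  simp [eta3, dotProduct, mulVec_diagonal, Fin.sum_univ_three, sub_eq_add_neg]

section Stabilizer

variable {w : Fin 3 → ℂ}

lemma quadric_eq_one_iff : w 0 ^ 2 - w 1 ^ 2 - w 2 ^ 2 = 1 ↔
    (Complex.re ∘ w) ⬝ᵥ eta3 *ᵥ (Complex.re ∘ w)
        - (Complex.im ∘ w) ⬝ᵥ eta3 *ᵥ (Complex.im ∘ w) = 1 ∧
      (Complex.re ∘ w) ⬝ᵥ eta3 *ᵥ (Complex.im ∘ w) = 0 := by
  simp only [dotProduct_eta3_mulVec, Complex.ext_iff, Function.comp_apply, sq, Complex.sub_re,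
    Complex.sub_im, Complex.mul_re, Complex.mul_im, Complex.one_re, Complex.one_im]
  grind

lemma nmat_mulVec_x0c (z : ℂ) : nmat z *ᵥ x0c = ![1 + z ^ 2 / 2, z, z ^ 2 / 2] := by
  ext i
  fin_cases i <;> simp [nmat, x0c]

lemma quadric_eq_one_of_mem_XiN (hw : w ∈ XiN) : w 0 ^ 2 - w 1 ^ 2 - w 2 ^ 2 = 1 := by
  obtain ⟨g, ⟨hg, -, -⟩, z, rfl⟩ := hw
  rw [quadric_eq_one_iff, re_act, im_act]
  simp only [mulVec_dotProduct_mulVec_mulVec_eq hg]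
  rw [← quadric_eq_one_iff, nmat_mulVec_x0c]
  dsimp only [cons_val]
  ring

lemma re_ne_zero_of_mem_XiN (hw : w ∈ XiN) : Complex.re ∘ w ≠ 0 := by
  obtain ⟨g, ⟨-, hdet, -⟩, z, rfl⟩ := hw
  rw [re_act]
  intro h
  have base_eq_zero : Complex.re ∘ (nmat z *ᵥ x0c) = 0 :=
    eq_zero_of_mulVec_eq_zero (hdet ▸ one_ne_zero) h
  have coord_zero : 1 + (z ^ 2).re / 2 = 0 := by
    simpa [nmat_mulVec_x0c] using congr_fun base_eq_zero 0
  have coord_two : (z ^ 2).re / 2 = 0 := by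
    simpa [nmat_mulVec_x0c] using congr_fun base_eq_zero 2
  linarith

lemma linearIndependent_or_timelike_re (hQ : w 0 ^ 2 - w 1 ^ 2 - w 2 ^ 2 = 1)
    (hre : Complex.re ∘ w ≠ 0) :
    LinearIndependent ℝ ![Complex.re ∘ w, Complex.im ∘ w] ∨
      0 < (Complex.re ∘ w) ⬝ᵥ eta3 *ᵥ (Complex.re ∘ w) := by
  rw [LinearIndependent.pair_iff' hre, or_iff_not_imp_left]
  intro dependent
  obtain ⟨c, hc⟩ : ∃ c : ℝ, c • (Complex.re ∘ w) = Complex.im ∘ w := by simpa using dependent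
  obtain ⟨norm_eq, orthogonal⟩ := quadric_eq_one_iff.1 hQ
  simp only [← hc, mulVec_smul, dotProduct_smul, smul_dotProduct, smul_eq_mul] at norm_eq orthogonal
  rcases mul_eq_zero.1 orthogonal with rfl | null
  · linarith
  · simp [null] at norm_eq

lemma stabilizer_subset_singleton_one
    (hw : LinearIndependent ℝ ![Complex.re ∘ w, Complex.im ∘ w]) :
    {g | g ∈ Gso ∧ act g w = w} ⊆ {1} := by
  rintro g ⟨⟨hg, hdet, -⟩, hgw⟩
  rw [eta3_eq_minkowskiMatrix] at hg
  refine eq_one_of_isometry_of_det_eq_one_of_fixed minkowskiMatrix.isSymm minkowskiMatrix.isUnit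
    hg hdet hw (by simp) (Fin.forall_fin_two.2 ⟨?_, ?_⟩)
  · exact (re_act g w).symm.trans (by rw [hgw]; rfl)
  · exact (im_act g w).symm.trans (by rw [hgw]; rfl)

lemma isClosed_stabilizer (w : Fin 3 → ℂ) : IsClosed {g | g ∈ Gso ∧ act g w = w} := by
  refine isClosed_Gso.inter (isClosed_eq ?_ continuous_const)
  unfold act
  fun_prop

lemma isCompact_stabilizer_of_timelike_re
    (hw : 0 < (Complex.re ∘ w) ⬝ᵥ eta3 *ᵥ (Complex.re ∘ w)) :
    IsCompact {g | g ∈ Gso ∧ act g w = w} := by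
  rw [eta3_eq_minkowskiMatrix] at hw
  refine (minkowskiMatrix.isCompact_stabilizer_of_timelike hw).of_isClosed_subset
    (isClosed_stabilizer w) fun g ⟨⟨hg, _, _⟩, hgw⟩ => ⟨eta3_eq_minkowskiMatrix ▸ hg, ?_⟩
  rw [← re_act, hgw]

end Stabilizer

theorem stmt_8_general (w : Fin 3 → ℂ) (hQ : w 0 ^ 2 - w 1 ^ 2 - w 2 ^ 2 = 1)
    (hre : Complex.re ∘ w ≠ 0) :
    IsCompact {g : Matrix (Fin 3) (Fin 3) ℝ | g ∈ Gso ∧ act g w = w} := by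
  rcases linearIndependent_or_timelike_re hQ hre with independent | timelike
  · exact (Set.finite_singleton 1).subset (stabilizer_subset_singleton_one independent) |>.isCompact
  · exact isCompact_stabilizer_of_timelike_re timelike

/-- for every `w ∈ Ξ_N` the stabilizer `G_w = {g ∈ G : g·w = w}` is a
compact subset of the real `3×3` matrices. -/
theorem stmt_8 (w : Fin 3 → ℂ) (hw : w ∈ XiN) :
    IsCompact {g : Matrix (Fin 3) (Fin 3) ℝ | g ∈ Gso ∧ act g w = w} :=
  stmt_8_general w (quadric_eq_one_of_mem_XiN hw) (re_ne_zero_of_mem_XiN hw)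
end
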